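/- arXiv:math/0205116 — 2 statements merged into one kernel-verified Lean document; each statement's English description precedes it below -/
import Mathlib

section
/- Let k ∈ {1, 2, 3} and suppose τ, σ, σ/τ ∈ H. Then Z_k(τ,σ) = τ^{−k} Z_k(−1/τ, σ/τ) + (−σ)^{−k} Z_k(−τ/σ, −1/σ) + iπ a_k, where the anomaly terms are a_1 = −1/2 + 1/(2τ) − 1/(2σ) + σ/(6τ) + τ/(6σ) + 1/(6τσ), a_2 = −1/τ + 1/σ − 1/(τσ), and a_3 = 1/(τσ). -/
open Complex Filter Topology

/-- The open upper half-plane as a subset of `ℂ`. -/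
def UHP : Set ℂ := {z : ℂ | 0 < z.im}

/-- `qexp τ = e^{2πiτ}`. -/
noncomputable def qexp (τ : ℂ) : ℂ := Complex.exp (2 * Real.pi * Complex.I * τ)

/-- Elliptic zeta values `Z_k(τ,σ)`. -/
noncomputable def ellipticZeta (k : ℕ) (τ σ : ℂ) : ℂ :=
  -((2 * (Real.pi : ℂ) * Complex.I) ^ k / (Nat.factorial (k - 1) : ℂ)) *
    ∑' j : ℕ+, (j : ℂ) ^ (k - 1) *
      (qexp τ ^ (j : ℕ) - (-1 : ℂ) ^ k * qexp σ ^ (j : ℕ)) /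
      ((1 - qexp τ ^ (j : ℕ)) * (1 - qexp σ ^ (j : ℕ)))

/-- `D_k(q)`: the normalized generating function of sums of `(k-1)`-st powers of divisors. -/
noncomputable def Dk (k : ℕ) (q : ℂ) : ℂ :=
  ((-2 * (Real.pi : ℂ) * Complex.I) ^ k / (Nat.factorial (k - 1) : ℂ)) *
    ∑' n : ℕ+, (∑ d ∈ Nat.divisors (n : ℕ), (d : ℂ) ^ (k - 1)) * q ^ (n : ℕ)

/-- Ruijsenaars's elliptic gamma function. -/
noncomputable def ellipticGamma (z τ σ : ℂ) : ℂ :=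
  ∏' p : ℕ × ℕ,
    (1 - qexp τ ^ (p.1 + 1) * qexp σ ^ (p.2 + 1) * Complex.exp (-(2 * Real.pi * Complex.I) * z)) /
    (1 - qexp τ ^ p.1 * qexp σ ^ p.2 * Complex.exp (2 * Real.pi * Complex.I * z))

/-- The modified theta function `θ₀(z,τ)`. -/
noncomputable def theta0 (z τ : ℂ) : ℂ :=
  ∏' j : ℕ, (1 - qexp τ ^ (j + 1) * Complex.exp (-(2 * Real.pi * Complex.I) * z)) *
            (1 - qexp τ ^ j * Complex.exp (2 * Real.pi * Complex.I * z))

/-- A modular form of weight `k` for `SL(2,ℤ)`: a holomorphic function on the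
upper half-plane transforming with weight `k` under `SL(2,ℤ)` and bounded as `Im τ → ∞`. -/
def IsModularForm (k : ℕ) (G : ℂ → ℂ) : Prop :=
  DifferentiableOn ℂ G UHP ∧
  (∀ A : Matrix.SpecialLinearGroup (Fin 2) ℤ, ∀ τ ∈ UHP,
      G (((A 0 0 : ℤ) * τ + (A 0 1 : ℤ)) / ((A 1 0 : ℤ) * τ + (A 1 1 : ℤ))) =
        ((A 1 0 : ℤ) * τ + (A 1 1 : ℤ)) ^ k * G τ) ∧
  (∃ C : ℝ, ∀ τ ∈ UHP, 1 ≤ τ.im → ‖G τ‖ ≤ C)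

/-- All factors in the defining double product of the elliptic gamma function are nonzero. -/
def EGFactorsNeZero (z τ σ : ℂ) : Prop :=
  ∀ j ℓ : ℕ,
    (1 - qexp τ ^ (j + 1) * qexp σ ^ (ℓ + 1) * Complex.exp (-(2 * Real.pi * Complex.I) * z)) ≠ 0 ∧
    (1 - qexp τ ^ j * qexp σ ^ ℓ * Complex.exp (2 * Real.pi * Complex.I * z)) ≠ 0

/-!
The residue theorem is applied to `z ^ (k - 1) ∏ 1 / (e^{2πi ω_j z} - 1)`, `ω = (1, -τ, σ)`, on
circles about `0` whose radii tend to infinity at a fixed distance from the moduli of all poles.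
The nonzero poles lie on the three lines `ω_i⁻¹ ℝ`, and their residues on each line form the Lambert
series of one of the three elliptic zeta values; the pole at `0` contributes the anomaly. The circle
integrals tend to `0` because the half-planes `im (ω_j z) < 0` cover `ℂ \ {0}`, so at every point of
a large circle some factor of the kernel is exponentially small.
-/

open Asymptotics Metric

section Residues

variable {f g : ℂ → ℂ} {p r s : ℂ}

/-- `f` has residue `r` at the isolated singularity `p`. It is encoded by a principal part which is
a polynomial in `(z - p)⁻¹` (so that essential singularities are excluded); that part is only
required to match `f` up to `o((z - p)⁻¹)`, which by Riemann's theorem on removable singularities is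
as good as up to a bounded error. -/
def HasResidueAt (f : ℂ → ℂ) (p r : ℂ) : Prop :=
  ∃ P : Polynomial ℂ, P.coeff 1 = r ∧
    (fun z => f z - P.eval (z - p)⁻¹) =o[𝓝[≠] p] fun z => (z - p)⁻¹

lemma HasResidueAt.congr' (hf : HasResidueAt f p r) (h : f =ᶠ[𝓝[≠] p] g) : HasResidueAt g p r := by
  obtain ⟨P, hP, ho⟩ := hf
  exact ⟨P, hP, ho.congr' (h.mono fun z hz => by simp only [hz]) EventuallyEq.rfl⟩

lemma HasResidueAt.add (hf : HasResidueAt f p r) (hg : HasResidueAt g p s) :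
    HasResidueAt (fun z => f z + g z) p (r + s) := by
  obtain ⟨P, hP, hPo⟩ := hf
  obtain ⟨Q, hQ, hQo⟩ := hg
  refine ⟨P + Q, by rw [Polynomial.coeff_add, hP, hQ], (hPo.add hQo).congr_left fun z => ?_⟩
  rw [Polynomial.eval_add]
  ring

lemma HasResidueAt.const_mul (hf : HasResidueAt f p r) (c : ℂ) :
    HasResidueAt (fun z => c * f z) p (c * r) := by
  obtain ⟨P, hP, hPo⟩ := hf
  refine ⟨Polynomial.C c * P, by rw [Polynomial.coeff_C_mul, hP],
    (hPo.const_mul_left c).congr_left fun z => ?_⟩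
  rw [Polynomial.eval_mul, Polynomial.eval_C]
  ring

lemma hasResidueAt_zero_of_isLittleO (hf : f =o[𝓝[≠] p] fun z => (z - p)⁻¹) :
    HasResidueAt f p 0 :=
  ⟨0, by simp, by simpa using hf⟩

lemma isBigO_one_of_continuousAt (hf : ContinuousAt f p) : f =O[𝓝[≠] p] fun _ => (1 : ℂ) :=
  (hf.tendsto.mono_left nhdsWithin_le_nhds).isBigO_one ℂ

lemma isLittleO_sub_inv_of_continuousAt (hf : ContinuousAt f p) :
    f =o[𝓝[≠] p] fun z => (z - p)⁻¹ := by
  refine (isBigO_one_of_continuousAt hf).trans_isLittleO ((isLittleO_one_left_iff ℂ).2 ?_)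
  have hsub : Tendsto (fun z => z - p) (𝓝[≠] p) (𝓝[≠] 0) := by
    refine tendsto_nhdsWithin_iff.2 ⟨?_, ?_⟩
    · exact tendsto_nhdsWithin_of_tendsto_nhds (by simpa using (continuous_sub_right p).tendsto p)
    · filter_upwards [self_mem_nhdsWithin] with z hz using sub_ne_zero.2 hz
  exact tendsto_norm_cobounded_atTop.comp (tendsto_inv₀_nhdsNE_zero.comp hsub)

lemma hasResidueAt_sub_zpow (p : ℂ) (n : ℤ) :
    HasResidueAt (fun z => (z - p) ^ n) p (if n = -1 then 1 else 0) := by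
  obtain ⟨k, rfl | rfl⟩ := n.eq_nat_or_neg
  · rw [if_neg (by lia)]
    refine hasResidueAt_zero_of_isLittleO (isLittleO_sub_inv_of_continuousAt ?_)
    simp only [zpow_natCast]
    fun_prop
  · refine ⟨Polynomial.X ^ k, ?_, ?_⟩
    · simp only [Polynomial.coeff_X_pow, neg_inj]
      norm_cast
      simp only [eq_comm]
    · simp [zpow_neg]

lemma hasResidueAt_of_tendsto (hf : Tendsto (fun z => (z - p) * f z) (𝓝[≠] p) (𝓝 r)) :
    HasResidueAt f p r := by
  refine ⟨Polynomial.C r * Polynomial.X, by simp, ?_⟩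
  have ho : (fun z => (z - p) * f z - r) =o[𝓝[≠] p] fun _ => (1 : ℂ) :=
    (isLittleO_one_iff ℂ).2 (by simpa using hf.sub_const r)
  refine (ho.mul_isBigO (isBigO_refl (fun z => (z - p)⁻¹) _)).congr' ?_ (by simp)
  filter_upwards [self_mem_nhdsWithin] with z hz
  have hz : z - p ≠ 0 := sub_ne_zero.2 hz
  simp only [Polynomial.eval_mul, Polynomial.eval_C, Polynomial.eval_X]
  field_simp

lemma hasResidueAt_div_of_hasDerivAt {u : ℂ → ℂ} {u' : ℂ} (hg : ContinuousAt g p)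
    (hu : HasDerivAt u u' p) (hup : u p = 0) (hu' : u' ≠ 0) :
    HasResidueAt (fun z => g z / u z) p (g p / u') := by
  refine hasResidueAt_of_tendsto ?_
  have hslope := (hasDerivAt_iff_tendsto_slope.1 hu).inv₀ hu'
  refine ((hg.tendsto.mono_left nhdsWithin_le_nhds).mul hslope).congr fun z => ?_
  rw [slope_def_field, hup, sub_zero, inv_div]
  ring

lemma circleIntegrable_eval_sub_inv (P : Polynomial ℂ) {c w : ℂ} {R : ℝ} (hw : w ∈ ball c R) :
    CircleIntegrable (fun z => P.eval (z - w)⁻¹) c R := by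
  have hR : 0 ≤ R := (pos_of_mem_ball hw).le
  refine ContinuousOn.circleIntegrable hR (P.continuous.comp_continuousOn ?_)
  exact ContinuousOn.inv₀ (by fun_prop) fun z hz =>
    sub_ne_zero.2 (ne_of_mem_of_not_mem hz fun h => (mem_ball.1 hw).ne (mem_sphere.1 h))

lemma circleIntegral_eval_sub_inv (P : Polynomial ℂ) {c w : ℂ} {R : ℝ} (hw : w ∈ ball c R) :
    (∮ z in C(c, R), P.eval (z - w)⁻¹) = 2 * Real.pi * I * P.coeff 1 := by
  induction P using Polynomial.induction_on' with
  | add P Q hP hQ =>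
    simp only [Polynomial.eval_add, Polynomial.coeff_add, mul_add]
    rw [circleIntegral.integral_add (circleIntegrable_eval_sub_inv P hw)
      (circleIntegrable_eval_sub_inv Q hw), hP, hQ]
  | monomial n a =>
    simp only [Polynomial.eval_monomial, Polynomial.coeff_monomial,
      circleIntegral.integral_const_mul]
    by_cases hn : n = 1
    · simp only [hn, pow_one, circleIntegral.integral_sub_inv_of_mem_ball hw, if_true]
      ring
    · have hzpow := circleIntegral.integral_sub_zpow_of_ne (n := -n) (by lia) c w R
      simp only [zpow_neg, zpow_natCast, ← inv_pow] at hzpow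
      rw [hzpow, if_neg hn, mul_zero, mul_zero]

lemma circleIntegral_eq_zero_of_isLittleO_sub_inv {c : ℂ} {R : ℝ} (hR : 0 ≤ R) {S : Set ℂ}
    (hS : S.Finite) (hSR : S ⊆ ball c R)
    (hd : ∀ z ∈ closedBall c R, z ∉ S → DifferentiableAt ℂ f z)
    (ho : ∀ p ∈ S, f =o[𝓝[≠] p] fun z => (z - p)⁻¹) : (∮ z in C(c, R), f z) = 0 := by
  classical
  set F : ℂ → ℂ := S.piecewise (fun z => limUnder (𝓝[≠] z) f) f
  have hF_eq : ∀ z ∉ S, F z = f z := fun z hz => Set.piecewise_eq_of_notMem _ _ _ hz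
  have hF_nhds : ∀ z ∉ S, F =ᶠ[𝓝 z] f := fun z hz =>
    (hS.isClosed.isOpen_compl.eventually_mem hz).mono hF_eq
  have hF_diff : ∀ z ∈ closedBall c R, z ∉ S → DifferentiableAt ℂ F z := fun z hz hzS =>
    (hd z hz hzS).congr_of_eventuallyEq (hF_nhds z hzS)
  have hF_cont : ∀ p ∈ S, ContinuousAt F p := by
    intro p hp
    have hnotMem : ∀ᶠ z in 𝓝[≠] p, z ∉ S := by
      filter_upwards [nhdsWithin_le_nhds
        ((hS.subset Set.sdiff_subset).isClosed.isOpen_compl.mem_nhds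
          (fun h : p ∈ S \ {p} => h.2 rfl)), self_mem_nhdsWithin] with z hz hzp hzS
      exact hz ⟨hzS, hzp⟩
    have hdiff : ∀ᶠ z in 𝓝[≠] p, DifferentiableAt ℂ f z := by
      filter_upwards [hnotMem, nhdsWithin_le_nhds (isOpen_ball.mem_nhds (hSR hp))] with z hz hzR
      exact hd z (ball_subset_closedBall hzR) hz
    have hlim := tendsto_limUnder_of_differentiable_on_punctured_nhds_of_isLittleO hdiff
      ((ho p hp).sub (isLittleO_sub_inv_of_continuousAt (continuousAt_const (y := f p))))
    have hFp : F p = limUnder (𝓝[≠] p) f := Set.piecewise_eq_of_mem _ _ _ hp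
    rw [continuousAt_iff_punctured_nhds, hFp]
    exact hlim.congr' (hnotMem.mono fun z hz => (hF_eq z hz).symm)
  calc (∮ z in C(c, R), f z) = ∮ z in C(c, R), F z :=
        circleIntegral.integral_congr hR fun z hz => (hF_eq z fun h =>
          (mem_ball.1 (hSR h)).ne (mem_sphere.1 hz)).symm
    _ = 0 := by
        refine circleIntegral_eq_zero_of_differentiable_on_off_countable hR hS.countable
          (fun z hz => ?_) fun z hz => hF_diff z (ball_subset_closedBall hz.1) hz.2
        by_cases hzS : z ∈ S
        · exact (hF_cont z hzS).continuousWithinAt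
        · exact (hF_diff z hz hzS).continuousAt.continuousWithinAt

theorem circleIntegral_eq_two_pi_I_mul_sum_residues {ι : Type*} {c : ℂ} {R : ℝ} (hR : 0 ≤ R)
    {S : Finset ι} {p : ι → ℂ} {r : ι → ℂ} (hp : Set.InjOn p S) (hpR : ∀ i ∈ S, p i ∈ ball c R)
    (hd : ∀ z ∈ closedBall c R, (∀ i ∈ S, z ≠ p i) → DifferentiableAt ℂ f z)
    (hr : ∀ i ∈ S, HasResidueAt f (p i) (r i)) :
    (∮ z in C(c, R), f z) = 2 * Real.pi * I * ∑ i ∈ S, r i := by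
  classical
  choose! P hPr hPo using hr
  have hP_diff : ∀ i, ∀ z ≠ p i, DifferentiableAt ℂ (fun z => (P i).eval (z - p i)⁻¹) z :=
    fun i z hz => (P i).differentiable.differentiableAt.comp z
      (DifferentiableAt.inv (by fun_prop) (sub_ne_zero.2 hz))
  have hne_sphere : ∀ z ∈ sphere c R, ∀ i ∈ S, z ≠ p i := fun z hz i hi h =>
    (mem_ball.1 (h ▸ hpR i hi)).ne (mem_sphere.1 hz)
  have hf_int : CircleIntegrable f c R := ContinuousOn.circleIntegrable hR fun z hz =>
    (hd z (sphere_subset_closedBall hz) (hne_sphere z hz)).continuousAt.continuousWithinAt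
  have hP_int : ∀ i ∈ S, CircleIntegrable (fun z => (P i).eval (z - p i)⁻¹) c R :=
    fun i hi => circleIntegrable_eval_sub_inv _ (hpR i hi)
  have hzero : (∮ z in C(c, R), (f z - ∑ i ∈ S, (P i).eval (z - p i)⁻¹)) = 0 := by
    refine circleIntegral_eq_zero_of_isLittleO_sub_inv hR (S := p '' S) (S.finite_toSet.image p)
      (Set.image_subset_iff.2 hpR) (fun z hz hzS => ?_) ?_
    · have hne : ∀ i ∈ S, z ≠ p i := fun i hi h => hzS ⟨i, hi, h.symm⟩
      exact (hd z hz hne).sub (DifferentiableAt.fun_sum fun i hi => hP_diff i z (hne i hi))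
    · rintro _ ⟨i, hi, rfl⟩
      have hothers : ContinuousAt (fun z => ∑ j ∈ S.erase i, (P j).eval (z - p j)⁻¹) (p i) := by
        refine (DifferentiableAt.fun_sum fun j hj => hP_diff j _ fun h => ?_).continuousAt
        obtain ⟨hji, hj⟩ := Finset.mem_erase.1 hj
        exact hji (hp hj hi h.symm)
      refine ((hPo i hi).sub (isLittleO_sub_inv_of_continuousAt hothers)).congr_left fun z => ?_
      rw [← Finset.add_sum_erase S (fun j => (P j).eval (z - p j)⁻¹) hi]
      ring
  have hsum : (∮ z in C(c, R), ∑ i ∈ S, (P i).eval (z - p i)⁻¹) =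
      2 * Real.pi * I * ∑ i ∈ S, r i := by
    rw [circleIntegral.integral_fun_sum hP_int, Finset.mul_sum]
    exact Finset.sum_congr rfl fun i hi => by
      rw [circleIntegral_eval_sub_inv _ (hpR i hi), hPr i hi]
  rw [circleIntegral.integral_sub hf_int (CircleIntegrable.fun_sum S hP_int), hsum] at hzero
  exact sub_eq_zero.1 hzero

end Residues

section Qexp

lemma norm_qexp (z : ℂ) : ‖qexp z‖ = Real.exp (-(2 * Real.pi * z.im)) := by
  simp [qexp, norm_exp]

lemma qexp_zero : qexp 0 = 1 := by
  simp [qexp]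

lemma qexp_neg (z : ℂ) : qexp (-z) = (qexp z)⁻¹ := by
  rw [qexp, mul_neg, exp_neg, qexp]

lemma qexp_mul_natCast (z : ℂ) (n : ℕ) : qexp (z * n) = qexp z ^ n := by
  rw [qexp, qexp, ← exp_nat_mul]
  ring_nf

lemma qexp_eq_one_iff {z : ℂ} : qexp z = 1 ↔ ∃ n : ℤ, z = n := by
  rw [qexp, exp_eq_one_iff]
  refine exists_congr fun n => ?_
  rw [mul_comm, mul_left_inj' two_pi_I_ne_zero]

lemma hasDerivAt_qexp (z : ℂ) : HasDerivAt qexp (2 * Real.pi * I * qexp z) z := by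
  unfold qexp
  simpa [mul_comm] using ((hasDerivAt_id z).const_mul (2 * Real.pi * I)).cexp

lemma differentiable_qexp : Differentiable ℂ qexp :=
  fun z => (hasDerivAt_qexp z).differentiableAt

lemma exists_le_norm_qexp_sub_one {δ : ℝ} (hδ : 0 < δ) :
    ∃ ε > 0, ∀ z : ℂ, (∀ n : ℤ, δ ≤ ‖z - n‖) → ε ≤ ‖qexp z - 1‖ := by
  have hlog : ContinuousAt log 1 := continuousAt_clog one_mem_slitPlane
  obtain ⟨ε, hε, hball⟩ := Metric.continuousAt_iff.1 hlog (2 * Real.pi * δ) (by positivity)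
  refine ⟨ε, hε, fun z hz => le_of_not_gt fun hlt => ?_⟩
  obtain ⟨n, hn⟩ := exp_eq_exp_iff_exists_int.1 (exp_log (exp_ne_zero (2 * Real.pi * I * z)))
  have hlog_eq : log (qexp z) = 2 * Real.pi * I * (z - (-n : ℤ)) := by
    rw [qexp, hn]
    push_cast
    ring
  have hsmall := hball (x := qexp z) (by rwa [dist_eq_norm])
  have hnorm : ‖(2 * Real.pi * I : ℂ)‖ = 2 * Real.pi := by simp [abs_of_pos Real.pi_pos]
  rw [log_one, dist_zero_right, hlog_eq, norm_mul, hnorm] at hsmall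
  exact (lt_of_mul_lt_mul_left hsmall (by positivity)).not_ge (hz _)

lemma exists_norm_inv_qexp_sub_one_le {δ : ℝ} (hδ : 0 < δ) :
    ∃ C ≥ 0, ∀ z : ℂ, (∀ n : ℤ, δ ≤ ‖z - n‖) →
      ‖(qexp z - 1)⁻¹‖ ≤ C * Real.exp (-(2 * Real.pi * max 0 (-z.im))) := by
  obtain ⟨ε, hε, hle⟩ := exists_le_norm_qexp_sub_one hδ
  refine ⟨1 + ε⁻¹, by positivity, fun z hz => ?_⟩
  have hεz := hle z hz
  have hpos : 0 < ‖qexp z - 1‖ := hε.trans_le hεz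
  have hone : 1 ≤ ε⁻¹ * ‖qexp z - 1‖ := by rwa [le_inv_mul_iff₀ hε, mul_one]
  have hmax : Real.exp (2 * Real.pi * max 0 (-z.im)) ≤ (1 + ε⁻¹) * ‖qexp z - 1‖ := by
    rcases max_choice 0 (-z.im) with h | h <;> rw [h]
    · rw [mul_zero, Real.exp_zero]
      linarith
    · rw [mul_neg, ← norm_qexp]
      linarith [norm_le_norm_sub_add (qexp z) 1, norm_one (α := ℂ)]
  rw [norm_inv, Real.exp_neg, ← div_eq_mul_inv, le_div_iff₀ (Real.exp_pos _),
    inv_mul_le_iff₀ hpos]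
  exact hmax.trans_eq (mul_comm _ _)

end Qexp

section ExpKernel

variable {ι : Type*} {s : Finset ι} {a : ι → ℂ}

/-- The product of the functions `1 / (e^{2πi a_j z} - 1)` over `j ∈ s`, which vanishes at all its
poles. -/
noncomputable def expKernel (s : Finset ι) (a : ι → ℂ) (z : ℂ) : ℂ :=
  ∏ j ∈ s, (qexp (a j * z) - 1)⁻¹

/-- The Lambert-type series `∑ n ^ m ∏ 1 / (e^{2πi a_j n} - 1)` over the nonzero integers; for
nonempty `s` the term `n = 0` is `0` because the kernel vanishes at its poles. -/
noncomputable def lambertSum (m : ℕ) (s : Finset ι) (a : ι → ℂ) : ℂ :=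
  ∑' n : ℤ, (n : ℂ) ^ m * expKernel s a n

lemma expKernel_zero (hs : s.Nonempty) : expKernel s a 0 = 0 := by
  obtain ⟨j, hj⟩ := hs
  exact Finset.prod_eq_zero hj (by rw [mul_zero, qexp_zero, sub_self, inv_zero])

lemma differentiableAt_expKernel {z : ℂ} (h : ∀ j ∈ s, ∀ n : ℤ, a j * z ≠ n) :
    DifferentiableAt ℂ (expKernel s a) z := by
  refine DifferentiableAt.fun_finsetProd fun j hj => DifferentiableAt.inv ?_ ?_
  · exact ((differentiable_qexp _).comp z (by fun_prop)).sub_const 1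
  · exact sub_ne_zero.2 fun hone => (qexp_eq_one_iff.1 hone).elim (h j hj)

lemma exists_norm_expKernel_le (s : Finset ι) (a : ι → ℂ) {δ : ι → ℝ} (hδ : ∀ j ∈ s, 0 < δ j) :
    ∃ C ≥ 0, ∀ z, (∀ j ∈ s, ∀ n : ℤ, δ j ≤ ‖a j * z - n‖) →
      ‖expKernel s a z‖ ≤ C * Real.exp (-(2 * Real.pi * ∑ j ∈ s, max 0 (-(a j * z).im))) := by
  choose! C hC0 hC using fun j hj => exists_norm_inv_qexp_sub_one_le (hδ j hj)
  refine ⟨∏ j ∈ s, C j, Finset.prod_nonneg hC0, fun z hz => ?_⟩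
  rw [expKernel, norm_prod, Finset.mul_sum, ← Finset.sum_neg_distrib, Real.exp_sum,
    ← Finset.prod_mul_distrib]
  exact Finset.prod_le_prod (fun j _ => norm_nonneg _) fun j hj => hC j hj _ (hz j hj)

lemma summable_int_pow_mul_exp_neg_mul_abs (m : ℕ) {c : ℝ} (hc : 0 < c) :
    Summable fun n : ℤ => |(n : ℝ)| ^ m * Real.exp (-c * |(n : ℝ)|) := by
  have hnat := Real.summable_pow_mul_exp_neg_nat_mul m hc
  refine Summable.of_nat_of_neg ?_ ?_ <;> simpa using hnat

lemma exists_mul_abs_le_sum_max_neg_im (hpos : ∃ j ∈ s, 0 < (a j).im)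
    (hneg : ∃ j ∈ s, (a j).im < 0) :
    ∃ c > 0, ∀ x : ℝ, c * |x| ≤ ∑ j ∈ s, max 0 (-(a j * x).im) := by
  obtain ⟨j, hj, hjpos⟩ := hpos
  obtain ⟨k, hk, hkneg⟩ := hneg
  refine ⟨min (a j).im (-(a k).im), lt_min hjpos (neg_pos.2 hkneg), fun x => ?_⟩
  have hterm : ∀ i ∈ s, -((a i).im * x) ≤ ∑ j ∈ s, max 0 (-(a j * x).im) := fun i hi => by
    rw [← im_mul_ofReal]
    exact (le_max_right _ _).trans <| Finset.single_le_sum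
      (f := fun j => max 0 (-(a j * x).im)) (fun j _ => le_max_left _ _) hi
  rcases le_total 0 x with hx | hx
  · rw [abs_of_nonneg hx]
    exact (mul_le_mul_of_nonneg_right (min_le_right _ _) hx).trans
      (by simpa using hterm k hk)
  · rw [abs_of_nonpos hx]
    exact (mul_le_mul_of_nonneg_right (min_le_left _ _) (neg_nonneg.2 hx)).trans
      (by simpa using hterm j hj)

lemma summable_pow_mul_expKernel (m : ℕ) (him : ∀ j ∈ s, (a j).im ≠ 0)
    (hpos : ∃ j ∈ s, 0 < (a j).im) (hneg : ∃ j ∈ s, (a j).im < 0) :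
    Summable fun n : ℤ => (n : ℂ) ^ m * expKernel s a n := by
  obtain ⟨c, hc, hle⟩ := exists_mul_abs_le_sum_max_neg_im hpos hneg
  obtain ⟨C, hC0, hC⟩ := exists_norm_expKernel_le s a fun j hj => abs_pos.2 (him j hj)
  have hfar : ∀ n : ℤ, n ≠ 0 → ∀ j ∈ s, ∀ l : ℤ, |(a j).im| ≤ ‖a j * n - l‖ := by
    intro n hn j _ l
    have him_eq : (a j * n - l).im = (a j).im * n := by simp
    refine le_trans ?_ (him_eq ▸ abs_im_le_norm (a j * n - l))
    rw [abs_mul]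
    exact le_mul_of_one_le_right (abs_nonneg _) (by exact_mod_cast Int.one_le_abs hn)
  refine ((summable_int_pow_mul_exp_neg_mul_abs m (c := 2 * Real.pi * c)
    (by positivity)).mul_left C).of_norm_bounded_eventually ?_
  filter_upwards [(Set.finite_singleton (0 : ℤ)).compl_mem_cofinite] with n hn
  calc ‖(n : ℂ) ^ m * expKernel s a n‖
      ≤ |(n : ℝ)| ^ m * (C * Real.exp (-(2 * Real.pi * ∑ j ∈ s, max 0 (-(a j * n).im)))) := by
        rw [norm_mul, norm_pow, norm_intCast]
        gcongr
        exact hC n (hfar n hn)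
    _ ≤ |(n : ℝ)| ^ m * (C * Real.exp (-(2 * Real.pi * (c * |(n : ℝ)|)))) := by
        gcongr
        exact_mod_cast hle n
    _ = C * (|(n : ℝ)| ^ m * Real.exp (-(2 * Real.pi * c) * |(n : ℝ)|)) := by
        ring_nf

end ExpKernel

section Radii

lemma le_abs_sub_intCast {ε x : ℝ} {n : ℤ} (hl : n + ε ≤ x) (hu : x + ε ≤ n + 1) (k : ℤ) :
    ε ≤ |x - k| := by
  rcases le_or_gt k n with hk | hk
  · have hk : (k : ℝ) ≤ n := by exact_mod_cast hk
    exact le_trans (by linarith) (le_abs_self _)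
  · have hk : (n : ℝ) + 1 ≤ k := by exact_mod_cast hk
    exact le_trans (by linarith) (neg_le_abs _)

lemma exists_subinterval_le_abs_mul_sub_intCast {α δ : ℝ} (hα : 0 < α) (hδ : 0 < δ) :
    ∃ ε > 0, ∀ y, ∃ y', Set.Icc y' (y' + ε) ⊆ Set.Icc y (y + δ) ∧
      ∀ x ∈ Set.Icc y' (y' + ε), ∀ n : ℤ, ε ≤ |x * α - n| := by
  obtain ⟨h, hpos, hhδ, hhα⟩ : ∃ h > 0, h ≤ δ ∧ h * α ≤ 1 :=
    ⟨min δ α⁻¹, by positivity, min_le_left _ _,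
      (mul_le_mul_of_nonneg_right (min_le_right _ _) hα.le).trans_eq (inv_mul_cancel₀ hα.ne')⟩
  obtain ⟨ε, hε, hεh, hεα⟩ : ∃ ε > 0, ε ≤ h / 4 ∧ ε ≤ h * α / 8 :=
    ⟨min (h / 4) (h * α / 8), by positivity, min_le_left _ _, min_le_right _ _⟩
  refine ⟨ε, hε, fun y => ?_⟩
  have hceil := Int.le_ceil (y * α)
  have hceil' := Int.ceil_lt_add_one (y * α)
  rcases le_total (y * α + h * α / 2) ⌈y * α⌉ with hmid | hmid
  · refine ⟨y + h / 8, Set.Icc_subset_Icc (by linarith) (by linarith), fun x hx => ?_⟩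
    have hl := mul_le_mul_of_nonneg_right hx.1 hα.le
    have hxh : x ≤ y + 3 * h / 8 := by linarith [hx.2]
    have hu := mul_le_mul_of_nonneg_right hxh hα.le
    refine le_abs_sub_intCast (n := ⌈y * α⌉ - 1) ?_ ?_ <;> push_cast <;> linarith
  · refine ⟨y + 5 * h / 8, Set.Icc_subset_Icc (by linarith) (by linarith), fun x hx => ?_⟩
    have hl := mul_le_mul_of_nonneg_right hx.1 hα.le
    have hxh : x ≤ y + 7 * h / 8 := by linarith [hx.2]
    have hu := mul_le_mul_of_nonneg_right hxh hα.le
    refine le_abs_sub_intCast (n := ⌈y * α⌉) ?_ ?_ <;> linarith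

lemma exists_interval_le_abs_mul_sub_intCast {ι : Type*} (s : Finset ι) {α : ι → ℝ}
    (hα : ∀ i, 0 < α i) :
    ∃ ε > 0, ∀ y, ∃ y' ≥ y, ∀ x ∈ Set.Icc y' (y' + ε), ∀ i ∈ s, ∀ n : ℤ, ε ≤ |x * α i - n| := by
  classical
  induction s using Finset.induction_on with
  | empty => exact ⟨1, one_pos, fun y => ⟨y, le_rfl, by simp⟩⟩
  | insert j s _ ih =>
    obtain ⟨δ, hδ, hs⟩ := ih
    obtain ⟨ε, hε, hj⟩ := exists_subinterval_le_abs_mul_sub_intCast (hα j) hδ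
    refine ⟨min δ ε, lt_min hδ hε, fun y => ?_⟩
    obtain ⟨u, hyu, hu⟩ := hs y
    obtain ⟨v, hvu, hv⟩ := hj u
    refine ⟨v, hyu.trans (hvu ⟨le_rfl, by linarith⟩).1, fun x hx i hi n => ?_⟩
    have hxv : x ∈ Set.Icc v (v + ε) := ⟨hx.1, hx.2.trans (by gcongr; exact min_le_right _ _)⟩
    rcases Finset.mem_insert.1 hi with rfl | hi
    · exact (min_le_right _ _).trans (hv x hxv n)
    · exact (min_le_left _ _).trans (hu x (hvu hxv) i hi n)

end Radii

section Reciprocity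

variable {ι : Type*} {ω : ι → ℂ}

lemma hasResidueAt_pow_mul_expKernel [DecidableEq ι] {s : Finset ι} {i : ι} (hi : i ∈ s)
    (hωi : ω i ≠ 0) (m : ℕ) {n : ℤ} (hn : ∀ j ∈ s.erase i, ∀ l : ℤ, ω j * (n / ω i) ≠ l) :
    HasResidueAt (fun z => z ^ m * expKernel s ω z) (n / ω i)
      ((2 * Real.pi * I)⁻¹ * ((ω i ^ (m + 1))⁻¹ *
        ((n : ℂ) ^ m * expKernel (s.erase i) (fun j => ω j / ω i) n))) := by
  have hqexp : qexp (ω i * (n / ω i)) = 1 := by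
    rw [mul_div_cancel₀ _ hωi]
    exact qexp_eq_one_iff.2 ⟨n, rfl⟩
  have hderiv : HasDerivAt (fun z => qexp (ω i * z) - 1) (2 * Real.pi * I * ω i) (n / ω i) := by
    have hlin : HasDerivAt (fun z => ω i * z) (ω i) (n / ω i) := by
      simpa using (hasDerivAt_id (n / ω i)).const_mul (ω i)
    simpa [hqexp] using ((hasDerivAt_qexp _).comp (n / ω i) hlin).sub_const 1
  have hcont : ContinuousAt (fun z => z ^ m * expKernel (s.erase i) ω z) (n / ω i) :=
    ((differentiable_id.pow m _).mul (differentiableAt_expKernel hn)).continuousAt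
  have hres := hasResidueAt_div_of_hasDerivAt hcont hderiv (by rw [hqexp, sub_self])
    (mul_ne_zero two_pi_I_ne_zero hωi)
  have hkernel : expKernel (s.erase i) ω (n / ω i) =
      expKernel (s.erase i) (fun j => ω j / ω i) n :=
    Finset.prod_congr rfl fun j _ => by rw [mul_div_left_comm, mul_comm (n : ℂ)]
  convert hres.congr' (.of_forall fun z => ?_) using 1
  · rw [hkernel, div_pow, pow_succ]
    field_simp
  · unfold expKernel
    rw [← Finset.mul_prod_erase s _ hi]
    ring

lemma mul_intCast_div_ne_intCast (hω : Pairwise fun i j => (ω i / ω j).im ≠ 0) {i j : ι}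
    (hij : j ≠ i) {n : ℤ} (hn : n ≠ 0) (l : ℤ) : ω j * (n / ω i) ≠ l := by
  intro h
  have him := congrArg im h
  rw [mul_div_left_comm, intCast_im, ← ofReal_intCast, im_ofReal_mul] at him
  exact mul_ne_zero (Int.cast_ne_zero.2 hn) (hω hij) him

lemma ne_zero_of_forall_exists_im_neg (hω : Pairwise fun i j => (ω i / ω j).im ≠ 0)
    (hcone : ∀ z ≠ 0, ∃ i, (ω i * z).im < 0) (i : ι) : ω i ≠ 0 := by
  intro hi
  obtain ⟨j, hj⟩ := hcone 1 one_ne_zero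
  have hij : i ≠ j := by
    rintro rfl
    simp [hi] at hj
  exact hω hij (by simp [hi])

variable [Fintype ι]

lemma exists_mul_norm_le_sum_max_neg_im (hcone : ∀ z ≠ 0, ∃ i, (ω i * z).im < 0) :
    ∃ κ > 0, ∀ z, κ * ‖z‖ ≤ ∑ i, max 0 (-(ω i * z).im) := by
  set g : ℂ → ℝ := fun z => ∑ i, max 0 (-(ω i * z).im)
  have hg : Continuous g := by fun_prop
  obtain ⟨u, hu, hmin⟩ := (isCompact_sphere (0 : ℂ) 1).exists_isMinOn
    (NormedSpace.sphere_nonempty.2 zero_le_one) hg.continuousOn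
  have hgu : 0 < g u := by
    obtain ⟨i, hi⟩ := hcone u (ne_of_mem_sphere hu one_ne_zero)
    exact Finset.sum_pos' (fun j _ => le_max_left _ _)
      ⟨i, Finset.mem_univ i, lt_max_of_lt_right (neg_pos.2 hi)⟩
  refine ⟨g u, hgu, fun z => ?_⟩
  rcases eq_or_ne z 0 with rfl | hz
  · simp
  have hnorm : 0 < ‖z‖ := norm_pos_iff.2 hz
  have hmem : ((‖z‖⁻¹ : ℝ) : ℂ) * z ∈ sphere (0 : ℂ) 1 := by simp [hz]
  have hhom : g (((‖z‖⁻¹ : ℝ) : ℂ) * z) = ‖z‖⁻¹ * g z := by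
    simp only [g, Finset.mul_sum, mul_left_comm (ω _), im_ofReal_mul,
      mul_max_of_nonneg _ _ (inv_nonneg.2 hnorm.le), mul_zero, mul_neg]
  have hle : g u ≤ ‖z‖⁻¹ * g z := hhom ▸ hmin hmem
  rwa [inv_mul_eq_div, le_div_iff₀ hnorm] at hle

lemma exists_norm_circleIntegral_pow_mul_expKernel_le (m : ℕ)
    (hcone : ∀ z ≠ 0, ∃ i, (ω i * z).im < 0) {ε : ℝ} (hε : 0 < ε) :
    ∃ C, ∃ κ > 0, ∀ R ≥ 0, (∀ i, ∀ n : ℤ, ε ≤ |R * ‖ω i‖ - n|) →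
      ‖∮ z in C(0, R), z ^ m * expKernel .univ ω z‖ ≤ C * (R ^ (m + 1) * Real.exp (-κ * R)) := by
  obtain ⟨κ, hκ, hκ_le⟩ := exists_mul_norm_le_sum_max_neg_im hcone
  obtain ⟨C, hC0, hC⟩ := exists_norm_expKernel_le .univ ω (δ := fun _ => ε) fun _ _ => hε
  refine ⟨2 * Real.pi * C, 2 * Real.pi * κ, by positivity, fun R hR hfar => ?_⟩
  have hbound : ∀ z ∈ sphere (0 : ℂ) R, ‖z ^ m * expKernel .univ ω z‖ ≤
      R ^ m * (C * Real.exp (-(2 * Real.pi * (κ * R)))) := by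
    intro z hz
    have hzR : ‖z‖ = R := mem_sphere_zero_iff_norm.1 hz
    rw [norm_mul, norm_pow, hzR]
    refine mul_le_mul_of_nonneg_left ((hC z fun i _ n => ?_).trans ?_) (by positivity)
    · calc ε ≤ |R * ‖ω i‖ - (|n| : ℤ)| := hfar i |n|
        _ = |‖ω i * z‖ - ‖(n : ℂ)‖| := by rw [norm_mul, hzR, norm_intCast, mul_comm, Int.cast_abs]
        _ ≤ ‖ω i * z - n‖ := abs_norm_sub_norm_le _ _
    · gcongr
      exact hzR ▸ hκ_le z
  refine (circleIntegral.norm_integral_le_of_norm_le_const hR hbound).trans_eq ?_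
  ring_nf

/-- The indices `(i, n)` of the nonzero poles `n / ω i` of `expKernel univ ω` in the closed disc of
radius `R` around `0`. -/
noncomputable def poleIndices (ω : ι → ℂ) (R : ℝ) : Finset (Σ _ : ι, ℤ) :=
  Finset.univ.sigma fun i => (Finset.Icc (-⌊R * ‖ω i‖⌋) ⌊R * ‖ω i‖⌋).erase 0

/-- The pole `n / ω i` of `expKernel univ ω` with index `some (i, n)`, or the pole `0`, which all
factors of the kernel share, with index `none`. -/
noncomputable def pole (ω : ι → ℂ) (x : Option (Σ _ : ι, ℤ)) : ℂ :=
  x.elim 0 fun x => x.2 / ω x.1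

lemma mem_poleIndices {R : ℝ} {x : Σ _ : ι, ℤ} :
    x ∈ poleIndices ω R ↔ x.2 ≠ 0 ∧ |(x.2 : ℝ)| ≤ R * ‖ω x.1‖ := by
  rw [poleIndices, Finset.mem_sigma, Finset.mem_erase, Finset.mem_Icc, ← abs_le, Int.le_floor,
    Int.cast_abs]
  simp

lemma injOn_pole (hω : Pairwise fun i j => (ω i / ω j).im ≠ 0) (hω0 : ∀ i, ω i ≠ 0) (R : ℝ) :
    Set.InjOn (pole ω) (poleIndices ω R).insertNone := by
  have hne0 : ∀ x, some x ∈ (poleIndices ω R).insertNone → pole ω (some x) ≠ 0 := fun x hx =>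
    div_ne_zero (Int.cast_ne_zero.2 (mem_poleIndices.1 (Finset.some_mem_insertNone.1 hx)).1) (hω0 _)
  rintro (_ | ⟨i, n⟩) hx (_ | ⟨j, l⟩) hy h
  · rfl
  · exact absurd h.symm (hne0 _ hy)
  · exact absurd h (hne0 _ hx)
  · simp only [pole, Option.elim_some] at h
    obtain rfl | hij := eq_or_ne j i
    · have hnl : (n : ℂ) = l := (div_left_inj' (hω0 j)).1 h
      rw [Int.cast_injective hnl]
    · refine absurd ?_ (mul_intCast_div_ne_intCast hω hij
        (mem_poleIndices.1 (Finset.some_mem_insertNone.1 hx)).1 l)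
      rw [h, mul_div_cancel₀ _ (hω0 j)]

lemma differentiableAt_expKernel_of_ne_pole (hω0 : ∀ i, ω i ≠ 0) {R : ℝ} {z : ℂ} (hz : ‖z‖ ≤ R)
    (h : ∀ x ∈ (poleIndices ω R).insertNone, z ≠ pole ω x) :
    DifferentiableAt ℂ (expKernel .univ ω) z := by
  rw [Finset.forall_mem_insertNone] at h
  refine differentiableAt_expKernel fun i _ n hn => ?_
  have hz_eq : z = n / ω i := by rw [← hn, mul_div_cancel_left₀ _ (hω0 i)]
  refine h.2 ⟨i, n⟩ (mem_poleIndices.2 ⟨?_, ?_⟩) hz_eq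
  · rintro rfl
    exact h.1 (by rw [hz_eq, Int.cast_zero, zero_div, pole, Option.elim_none])
  · rw [← Complex.norm_intCast, ← hn, norm_mul, mul_comm]
    gcongr

lemma circleIntegral_pow_mul_expKernel [DecidableEq ι] (m : ℕ)
    (hω : Pairwise fun i j => (ω i / ω j).im ≠ 0) (hω0 : ∀ i, ω i ≠ 0) {r : ℂ}
    (hr : HasResidueAt (fun z => z ^ m * expKernel .univ ω z) 0 r) {R : ℝ} (hR : 0 < R)
    (hRn : ∀ i, ∀ n : ℤ, R * ‖ω i‖ ≠ n) :
    (∮ z in C(0, R), z ^ m * expKernel .univ ω z) = 2 * Real.pi * I * r +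
      ∑ i, (ω i ^ (m + 1))⁻¹ * ∑ n ∈ (Finset.Icc (-⌊R * ‖ω i‖⌋) ⌊R * ‖ω i‖⌋).erase 0,
        (n : ℂ) ^ m * expKernel (Finset.univ.erase i) (fun j => ω j / ω i) n := by
  rw [circleIntegral_eq_two_pi_I_mul_sum_residues hR.le (injOn_pole hω hω0 R) (r := fun x =>
    x.elim r fun x => (2 * Real.pi * I)⁻¹ * ((ω x.1 ^ (m + 1))⁻¹ *
      ((x.2 : ℂ) ^ m * expKernel (Finset.univ.erase x.1) (fun j => ω j / ω x.1) x.2)))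
    ?_ (fun z hz hzp => (differentiableAt_fun_id.fun_pow m).fun_mul
      (differentiableAt_expKernel_of_ne_pole hω0 (mem_closedBall_zero_iff.1 hz) hzp)) ?_]
  · simp only [Finset.sum_insertNone, Option.elim_none, Option.elim_some, poleIndices,
      Finset.sum_sigma, ← Finset.mul_sum, mul_add]
    rw [mul_inv_cancel_left₀ two_pi_I_ne_zero]
  · rw [Finset.forall_mem_insertNone]
    refine ⟨mem_ball_self hR, fun x hx => ?_⟩
    have hlt := (mem_poleIndices.1 hx).2.lt_of_ne fun h => hRn x.1 |x.2| (by rw [← h, Int.cast_abs])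
    simpa [pole, div_lt_iff₀ (norm_pos_iff.2 (hω0 x.1))] using hlt
  · rw [Finset.forall_mem_insertNone]
    refine ⟨hr, fun x hx => hasResidueAt_pow_mul_expKernel (Finset.mem_univ _) (hω0 _) m
      fun j hj => ?_⟩
    exact mul_intCast_div_ne_intCast hω (Finset.ne_of_mem_erase hj) (mem_poleIndices.1 hx).1

lemma exists_mem_erase_im_div_neg [DecidableEq ι] (hω : Pairwise fun i j => (ω i / ω j).im ≠ 0)
    (hcone : ∀ z ≠ 0, ∃ i, (ω i * z).im < 0) (i : ι) :
    ∃ j ∈ Finset.univ.erase i, (ω j / ω i).im < 0 := by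
  have hi := ne_zero_of_forall_exists_im_neg hω hcone i
  obtain ⟨j, hj⟩ := hcone _ (inv_ne_zero hi)
  refine ⟨j, Finset.mem_erase.2 ⟨?_, Finset.mem_univ j⟩, hj⟩
  rintro rfl
  simp [hi] at hj

lemma exists_mem_erase_im_div_pos [DecidableEq ι] (hω : Pairwise fun i j => (ω i / ω j).im ≠ 0)
    (hcone : ∀ z ≠ 0, ∃ i, (ω i * z).im < 0) (i : ι) :
    ∃ j ∈ Finset.univ.erase i, 0 < (ω j / ω i).im := by
  have hi := ne_zero_of_forall_exists_im_neg hω hcone i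
  obtain ⟨j, hj⟩ := hcone _ (neg_ne_zero.2 (inv_ne_zero hi))
  rw [mul_neg, neg_im, neg_lt_zero] at hj
  refine ⟨j, Finset.mem_erase.2 ⟨?_, Finset.mem_univ j⟩, hj⟩
  rintro rfl
  simp [hi] at hj

lemma tendsto_sum_erase_zero_lambertSum [DecidableEq ι] (m : ℕ)
    (hω : Pairwise fun i j => (ω i / ω j).im ≠ 0) (hcone : ∀ z ≠ 0, ∃ i, (ω i * z).im < 0) (i : ι) :
    Tendsto (fun R : ℝ => ∑ n ∈ (Finset.Icc (-⌊R * ‖ω i‖⌋) ⌊R * ‖ω i‖⌋).erase 0,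
      (n : ℂ) ^ m * expKernel (Finset.univ.erase i) (fun j => ω j / ω i) n) atTop
      (𝓝 (lambertSum m (Finset.univ.erase i) fun j => ω j / ω i)) := by
  have hpos := exists_mem_erase_im_div_pos hω hcone i
  have hneg := exists_mem_erase_im_div_neg hω hcone i
  have hsum := summable_pow_mul_expKernel m
    (fun j hj => hω (Finset.ne_of_mem_erase hj)) hpos hneg
  have hfloor : Tendsto (fun R : ℝ => ⌊R * ‖ω i‖⌋) atTop atTop := tendsto_floor_atTop.comp
    (tendsto_id.atTop_mul_const (norm_pos_iff.2 (ne_zero_of_forall_exists_im_neg hω hcone i)))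
  refine (hsum.hasSum.comp (Finset.tendsto_Icc_neg_atTop_atTop.comp hfloor)).congr
    fun R => (Finset.sum_erase _ ?_).symm
  rw [Int.cast_zero, expKernel_zero (hpos.imp fun _ h => h.1), mul_zero]

theorem sum_lambertSum_div_eq [DecidableEq ι] (m : ℕ)
    (hω : Pairwise fun i j => (ω i / ω j).im ≠ 0) (hcone : ∀ z ≠ 0, ∃ i, (ω i * z).im < 0) {r : ℂ}
    (hr : HasResidueAt (fun z => z ^ m * expKernel .univ ω z) 0 r) :
    ∑ i, (ω i ^ (m + 1))⁻¹ * lambertSum m (Finset.univ.erase i) (fun j => ω j / ω i) =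
      -(2 * Real.pi * I * r) := by
  have hω0 := ne_zero_of_forall_exists_im_neg hω hcone
  obtain ⟨ε, hε, hradius⟩ := exists_interval_le_abs_mul_sub_intCast Finset.univ
    fun i => norm_pos_iff.2 (hω0 i)
  obtain ⟨C, κ, hκ, hC⟩ := exists_norm_circleIntegral_pow_mul_expKernel_le m hcone hε
  choose R hNR hfar using fun N : ℕ => hradius (N + 1)
  replace hfar : ∀ N i, ∀ n : ℤ, ε ≤ |R N * ‖ω i‖ - n| := fun N i =>
    hfar N (R N) ⟨le_rfl, by linarith⟩ i (Finset.mem_univ i)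
  have hR0 : ∀ N, 0 < R N := fun N => (by positivity : (0 : ℝ) < N + 1).trans_le (hNR N)
  have hR : Tendsto R atTop atTop := tendsto_atTop_mono hNR
    (tendsto_atTop_add_const_right _ _ tendsto_natCast_atTop_atTop)
  have hzero : Tendsto (fun N => ∮ z in C(0, R N), z ^ m * expKernel .univ ω z) atTop (𝓝 0) := by
    refine squeeze_zero_norm (fun N => hC _ (hR0 N).le (hfar N)) ?_
    have hdecay : Tendsto (fun x => x ^ (m + 1) * Real.exp (-κ * x)) atTop (𝓝 0) := by
      simpa only [Real.rpow_natCast] using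
        tendsto_rpow_mul_exp_neg_mul_atTop_nhds_zero ((m + 1 : ℕ) : ℝ) κ hκ
    simpa using (hdecay.comp hR).const_mul C
  have hsum : Tendsto (fun N => ∮ z in C(0, R N), z ^ m * expKernel .univ ω z) atTop
      (𝓝 (2 * Real.pi * I * r +
        ∑ i, (ω i ^ (m + 1))⁻¹ * lambertSum m (Finset.univ.erase i) fun j => ω j / ω i)) := by
    have hRn : ∀ N i, ∀ n : ℤ, R N * ‖ω i‖ ≠ n := fun N i n h =>
      hε.not_ge (by simpa [h] using hfar N i n)
    simp only [fun N => circleIntegral_pow_mul_expKernel m hω hω0 hr (hR0 N) (hRn N)]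
    exact tendsto_const_nhds.add (tendsto_finsetSum _ fun i _ => tendsto_const_nhds.mul
      ((tendsto_sum_erase_zero_lambertSum m hω hcone i).comp hR))
  exact eq_neg_of_add_eq_zero_right (tendsto_nhds_unique hsum hzero)

end Reciprocity

section ResidueAtZero

lemma isLittleO_div_exp_sub_one :
    (fun w : ℂ => w / (exp w - 1) - (1 + -1 / 2 * w + 1 / 12 * w ^ 2)) =o[𝓝[≠] 0]
      fun w => w ^ 2 := by
  have hexp : (fun w : ℂ => exp w - (1 + w + w ^ 2 / 2 + w ^ 3 / 6)) =O[𝓝[≠] 0] fun w => w ^ 4 := by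
    have h := (exp_sub_sum_range_isBigO_pow 4).mono (nhdsWithin_le_nhds (s := {(0 : ℂ)}ᶜ))
    simpa [Finset.sum_range_succ, Nat.factorial] using h
  have hnum : (fun w : ℂ => w - (1 + -1 / 2 * w + 1 / 12 * w ^ 2) * (exp w - 1)) =O[𝓝[≠] 0]
      fun w => w ^ 4 := by
    have hmain := (isBigO_one_of_continuousAt (p := 0)
      (f := fun w => -(1 + -1 / 2 * w + 1 / 12 * w ^ 2)) (by fun_prop)).mul hexp
    have hrest := (isBigO_one_of_continuousAt (p := 0)
      (f := fun w => 1 / 24 - w / 72) (by fun_prop)).mul (isBigO_refl (· ^ 4) _)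
    refine (hmain.add hrest).congr (fun w => ?_) fun w => one_mul _
    ring
  have hderiv : HasDerivAt exp 1 0 := by simpa using hasDerivAt_exp 0
  have hden : (fun w : ℂ => (exp w - 1)⁻¹) =O[𝓝[≠] 0] fun w => w⁻¹ := by
    have hslope := ((hasDerivAt_iff_tendsto_slope.1 hderiv).inv₀ one_ne_zero).isBigO_one ℂ
    refine (hslope.mul (isBigO_refl (fun w : ℂ => w⁻¹) _)).congr' ?_ (by simp)
    filter_upwards [self_mem_nhdsWithin] with w hw
    rw [slope_def_field, exp_zero, sub_zero, inv_div]
    field_simp [show w ≠ 0 from hw]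
  have hlittle : (fun w : ℂ => w ^ 4 * w⁻¹) =o[𝓝[≠] 0] fun w => w ^ 2 := by
    refine ((isLittleO_pow_pow (show 2 < 3 by lia)).mono nhdsWithin_le_nhds).congr'
      ?_ EventuallyEq.rfl
    filter_upwards [self_mem_nhdsWithin] with w hw
    field_simp [show w ≠ 0 from hw]
  refine ((hnum.mul hden).trans_isLittleO hlittle).congr' ?_ EventuallyEq.rfl
  filter_upwards [hderiv.eventually_ne one_ne_zero (c := 1)] with w hw
  field_simp [sub_ne_zero.2 hw]

lemma isLittleO_mul_sub_quadratic {f g : ℂ → ℂ} {a b c d : ℂ}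
    (hf : (fun z => f z - (1 + a * z + b * z ^ 2)) =o[𝓝[≠] 0] fun z => z ^ 2)
    (hg : (fun z => g z - (1 + c * z + d * z ^ 2)) =o[𝓝[≠] 0] fun z => z ^ 2) :
    (fun z => f z * g z - (1 + (a + c) * z + (b + a * c + d) * z ^ 2)) =o[𝓝[≠] 0]
      fun z => z ^ 2 := by
  have hsq : (fun z : ℂ => z ^ 2) =O[𝓝[≠] 0] fun _ => (1 : ℂ) :=
    isBigO_one_of_continuousAt (by fun_prop)
  have hg_bdd : g =O[𝓝[≠] 0] fun _ => (1 : ℂ) := by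
    refine ((hg.isBigO.trans hsq).add (isBigO_one_of_continuousAt
      (f := fun z => 1 + c * z + d * z ^ 2) (by fun_prop))).congr_left fun z => ?_
    ring
  have hleft := hf.mul_isBigO hg_bdd
  have hright := (isBigO_one_of_continuousAt
    (f := fun z => 1 + a * z + b * z ^ 2) (by fun_prop)).mul_isLittleO hg
  have hcubic := (isBigO_one_of_continuousAt
    (f := fun z => a * d + b * c + b * d * z) (by fun_prop)).mul_isLittleO
    ((isLittleO_pow_pow (𝕜 := ℂ) (show 2 < 3 by lia)).mono (nhdsWithin_le_nhds (s := {0}ᶜ)))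
  simp only [mul_one, one_mul] at hleft hright hcubic
  refine ((hleft.add hright).add hcubic).congr_left fun z => ?_
  ring

variable {ι : Type*} {s : Finset ι} {a : ι → ℂ}

lemma isLittleO_prod_div_exp_sub_one (ha : ∀ j ∈ s, a j ≠ 0) :
    (fun z => ∏ j ∈ s, (a j * z / (exp (a j * z) - 1)) - (1 + -(∑ j ∈ s, a j) / 2 * z +
      ((∑ j ∈ s, a j) ^ 2 / 8 - (∑ j ∈ s, a j ^ 2) / 24) * z ^ 2)) =o[𝓝[≠] 0]
      fun z => z ^ 2 := by
  classical
  induction s using Finset.induction_on with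
  | empty => simp
  | insert i s hi ih =>
    have hai := ha i (Finset.mem_insert_self i s)
    have hscale : Tendsto (fun z => a i * z) (𝓝[≠] 0) (𝓝[≠] 0) := by
      refine tendsto_nhdsWithin_iff.2 ⟨tendsto_nhdsWithin_of_tendsto_nhds ?_, ?_⟩
      · simpa using (continuous_const_mul (a i)).tendsto 0
      · filter_upwards [self_mem_nhdsWithin] with z hz using mul_ne_zero hai hz
    have hfactor : (fun z => a i * z / (exp (a i * z) - 1) -
        (1 + -a i / 2 * z + a i ^ 2 / 12 * z ^ 2)) =o[𝓝[≠] 0] fun z => z ^ 2 := by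
      have hcomp := isLittleO_div_exp_sub_one.comp_tendsto hscale
      have hsq : ((fun w => w ^ 2) ∘ fun z => a i * z) =O[𝓝[≠] 0] fun z => z ^ 2 :=
        ((isBigO_refl (fun z : ℂ => z ^ 2) _).const_mul_left (a i ^ 2)).congr_left
          fun z => (mul_pow _ _ _).symm
      refine (hcomp.trans_isBigO hsq).congr_left fun z => ?_
      simp only [Function.comp_apply]
      ring
    refine (isLittleO_mul_sub_quadratic hfactor
      (ih fun j hj => ha j (Finset.mem_insert_of_mem hj))).congr_left fun z => ?_
    rw [Finset.prod_insert hi, Finset.sum_insert hi, Finset.sum_insert hi]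
    ring

lemma hasResidueAt_zero_zpow_mul {f : ℂ → ℂ} {c d : ℂ} (m : ℕ)
    (hf : (fun z => f z - (1 + c * z + d * z ^ 2)) =o[𝓝[≠] 0] fun z => z ^ 2) :
    HasResidueAt (fun z => z ^ (m - 3 : ℤ) * f z) 0
      (if m = 0 then d else if m = 1 then c else if m = 2 then 1 else 0) := by
  have hrem : HasResidueAt (fun z => z ^ (m - 3 : ℤ) * (f z - (1 + c * z + d * z ^ 2))) 0 0 := by
    refine hasResidueAt_zero_of_isLittleO (((isBigO_refl _ _).mul_isLittleO hf).trans_isBigO ?_)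
    have hpow := (isBigO_one_of_continuousAt (f := fun z : ℂ => z ^ m) (p := 0) (by fun_prop)).mul
      (isBigO_refl (fun z : ℂ => (z - 0)⁻¹) _)
    refine hpow.congr' ?_ (.of_forall fun z => one_mul _)
    filter_upwards [self_mem_nhdsWithin] with z hz
    rw [sub_zero, zpow_sub₀ hz, zpow_natCast, zpow_ofNat]
    field_simp [show z ≠ 0 from hz]
  have hmono : ∀ n : ℤ, HasResidueAt (fun z => z ^ n) 0 (if n = -1 then 1 else 0) := fun n => by
    simpa using hasResidueAt_sub_zpow 0 n
  have hmain := (((hmono (m - 3)).add ((hmono (m - 2)).const_mul c)).add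
    ((hmono (m - 1)).const_mul d)).add hrem
  convert hmain.congr' ?_ using 1
  · split_ifs <;> first | lia | simp
  · filter_upwards [self_mem_nhdsWithin] with z hz
    have hz : z ≠ 0 := hz
    rw [show (m - 2 : ℤ) = m - 3 + 1 by ring, show (m - 1 : ℤ) = m - 3 + 2 by ring,
      zpow_add₀ hz, zpow_add₀ hz, zpow_one, zpow_ofNat]
    ring

lemma hasResidueAt_zero_pow_mul_expKernel (m : ℕ) (hs : s.card = 3) (ha : ∀ j ∈ s, a j ≠ 0) :
    HasResidueAt (fun z => z ^ m * expKernel s a z) 0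
      ((∏ j ∈ s, 2 * Real.pi * I * a j)⁻¹ *
        if m = 0 then (2 * Real.pi * I) ^ 2 * ((∑ j ∈ s, a j) ^ 2 / 8 - (∑ j ∈ s, a j ^ 2) / 24)
        else if m = 1 then -(2 * Real.pi * I) * (∑ j ∈ s, a j) / 2
        else if m = 2 then 1 else 0) := by
  have hb : ∀ j ∈ s, 2 * Real.pi * I * a j ≠ 0 := fun j hj =>
    mul_ne_zero two_pi_I_ne_zero (ha j hj)
  convert ((hasResidueAt_zero_zpow_mul m (isLittleO_prod_div_exp_sub_one hb)).const_mul
    (∏ j ∈ s, 2 * Real.pi * I * a j)⁻¹).congr' ?_ using 2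
  · simp only [mul_pow, ← Finset.mul_sum]
    congr 2
    · ring
    · ring
  · filter_upwards [self_mem_nhdsWithin] with z hz
    have hz : z ≠ 0 := hz
    have hne := Finset.prod_ne_zero_iff.2 hb
    have hnum : ∏ j ∈ s, 2 * Real.pi * I * a j * z = (∏ j ∈ s, 2 * Real.pi * I * a j) * z ^ 3 := by
      rw [Finset.prod_mul_distrib, Finset.prod_const, hs]
    simp only [expKernel, qexp, ← mul_assoc, Finset.prod_div_distrib, hnum,
      Finset.prod_inv_distrib]
    rw [zpow_sub₀ hz, zpow_natCast, zpow_ofNat]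
    field_simp

end ResidueAtZero

section EllipticZeta

variable {ι : Type*} {τ σ : ℂ}

lemma ne_zero_of_mem_UHP {z : ℂ} (hz : z ∈ UHP) : z ≠ 0 := by
  rintro rfl
  exact lt_irrefl (0 : ℝ) hz

lemma neg_one_div_mem_UHP {z : ℂ} (hz : z ∈ UHP) : -1 / z ∈ UHP := by
  have hnormSq : 0 < normSq z := normSq_pos.2 (ne_zero_of_mem_UHP hz)
  have hz : 0 < z.im := hz
  change 0 < (-1 / z).im
  rw [neg_div, one_div, neg_im, inv_im, neg_div, neg_neg]
  positivity

lemma lambertSum_neg (m : ℕ) (s : Finset ι) (a : ι → ℂ) :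
    lambertSum m s (-a) = (-1) ^ m * lambertSum m s a := by
  rw [lambertSum, ← (Equiv.neg ℤ).tsum_eq, lambertSum, ← tsum_mul_left]
  refine tsum_congr fun n => ?_
  simp only [expKernel, Equiv.neg_apply, Int.cast_neg, Pi.neg_apply, neg_mul_neg, neg_pow (n : ℂ),
    mul_assoc]

lemma lambertSum_pair [DecidableEq ι] (m : ℕ) (a : ι → ℂ) {i j : ι} (hij : i ≠ j) :
    lambertSum m {i, j} a = lambertSum m .univ ![a i, a j] := by
  simp only [lambertSum, expKernel, Finset.prod_pair hij, Fin.prod_univ_two, Matrix.cons_val_zero,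
    Matrix.cons_val_one]

lemma inv_qexp_sub_one_mul_add (m : ℕ) (x y : ℂ) :
    (qexp (-x) - 1)⁻¹ * (qexp y - 1)⁻¹ + (-1) ^ m * ((qexp x - 1)⁻¹ * (qexp (-y) - 1)⁻¹) =
      -((qexp x - (-1) ^ (m + 1) * qexp y) / ((1 - qexp x) * (1 - qexp y))) := by
  have hinv : ∀ z, (qexp (-z) - 1)⁻¹ = qexp z / (1 - qexp z) := by
    intro z
    have hz : qexp z ≠ 0 := exp_ne_zero _
    rw [qexp_neg, ← inv_div, sub_div, div_self hz, one_div]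
  rw [hinv x, hinv y, ← neg_sub 1 (qexp x), ← neg_sub 1 (qexp y), inv_neg, inv_neg, div_eq_mul_inv,
    div_eq_mul_inv, div_eq_mul_inv, mul_inv]
  ring

lemma ellipticZeta_succ_eq_lambertSum (m : ℕ) (hτ : τ ∈ UHP) (hσ : σ ∈ UHP) :
    ellipticZeta (m + 1) τ σ =
      (2 * Real.pi * I) ^ (m + 1) / m.factorial * lambertSum m .univ ![-τ, σ] := by
  have hτ : 0 < τ.im := hτ
  have hσ : 0 < σ.im := hσ
  have hsum : Summable fun n : ℤ => (n : ℂ) ^ m * expKernel .univ ![-τ, σ] n := by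
    refine summable_pow_mul_expKernel m ?_ ⟨1, by simp [hσ]⟩ ⟨0, by simp [hτ]⟩
    simp [Fin.forall_fin_two, hτ.ne', hσ.ne']
  have hpos : Summable fun n : ℕ+ => ((n : ℤ) : ℂ) ^ m * expKernel .univ ![-τ, σ] (n : ℤ) :=
    hsum.comp_injective (i := fun n : ℕ+ => (n : ℤ)) (fun _ _ h => by simpa using h)
  have hneg : Summable fun n : ℕ+ => ((-n : ℤ) : ℂ) ^ m * expKernel .univ ![-τ, σ] (-n : ℤ) :=
    hsum.comp_injective (i := fun n : ℕ+ => (-n : ℤ)) (fun _ _ h => by simpa using h)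
  rw [ellipticZeta, lambertSum, tsum_int_eq_zero_add_tsum_pnat hsum, Int.cast_zero,
    expKernel_zero Finset.univ_nonempty, mul_zero, zero_add, ← hpos.tsum_add hneg,
    Nat.add_sub_cancel, neg_mul, ← mul_neg, ← tsum_neg]
  congr 1
  refine tsum_congr fun n => ?_
  have h := inv_qexp_sub_one_mul_add m (τ * n) (σ * n)
  rw [← qexp_mul_natCast, ← qexp_mul_natCast, mul_div_assoc, ← mul_neg, ← h]
  simp only [expKernel, Fin.prod_univ_two, Matrix.cons_val_zero, Matrix.cons_val_one, Int.cast_neg,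
    Int.cast_natCast, neg_mul, mul_neg, neg_neg, neg_pow (n : ℂ)]
  ring

lemma exists_im_mul_neg (hτ : τ ∈ UHP) (hσ : σ ∈ UHP) (hστ : σ / τ ∈ UHP) {z : ℂ} (hz : z ≠ 0) :
    ∃ i, (![1, -τ, σ] i * z).im < 0 := by
  have hnormSq : 0 < normSq τ := normSq_pos.2 (ne_zero_of_mem_UHP hτ)
  have hτ : 0 < τ.im := hτ
  have hσ : 0 < σ.im := hσ
  have hστ : 0 < (σ / τ).im := hστ
  have hdet : 0 < σ.im * τ.re - σ.re * τ.im := by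
    rwa [div_im, ← sub_div, div_pos_iff_of_pos_right hnormSq] at hστ
  by_contra! h
  have h0 : 0 ≤ z.im := by simpa using h 0
  have h1 : τ.re * z.im ≤ -(τ.im * z.re) := by simpa using h 1
  have h2 : 0 ≤ σ.re * z.im + σ.im * z.re := by simpa using h 2
  have him : z.im = 0 := by
    refine h0.antisymm' (nonpos_of_mul_nonpos_left ?_ hdet)
    nlinarith [mul_nonneg hτ.le h2, mul_nonneg hσ.le (sub_nonneg.2 h1)]
  rw [him, mul_zero, neg_nonneg] at h1
  rw [him, mul_zero, zero_add] at h2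
  refine hz (Complex.ext ?_ him)
  exact (nonpos_of_mul_nonpos_right h1 hτ).antisymm (nonneg_of_mul_nonneg_right h2 hσ)

lemma pairwise_im_div_ne_zero (hτ : τ ∈ UHP) (hσ : σ ∈ UHP) (hστ : σ / τ ∈ UHP) :
    Pairwise fun i j => (![1, -τ, σ] i / ![1, -τ, σ] j).im ≠ 0 := by
  have him : ∀ {z : ℂ}, z ∈ UHP → z.im ≠ 0 := fun {z} (hz : 0 < z.im) => hz.ne'
  have hinv : ∀ {z : ℂ}, z ∈ UHP → z⁻¹.im ≠ 0 := fun {z} hz => by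
    simpa only [neg_div, one_div, neg_im, neg_ne_zero] using him (neg_one_div_mem_UHP hz)
  have hτσ : (τ / σ).im ≠ 0 := inv_div σ τ ▸ hinv hστ
  intro i j hij
  fin_cases i <;> fin_cases j <;>
    simp [-inv_im, neg_div, div_neg, him hτ, him hσ, him hστ, hinv hτ, hinv hσ, hτσ] at hij ⊢

theorem lambertSum_three_term (m : ℕ) (hτ : τ ∈ UHP) (hσ : σ ∈ UHP) (hστ : σ / τ ∈ UHP) {r : ℂ}
    (hr : HasResidueAt (fun z => z ^ m * expKernel .univ ![1, -τ, σ] z) 0 r) :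
    lambertSum m .univ ![-τ, σ] = (τ ^ (m + 1))⁻¹ * lambertSum m .univ ![1 / τ, σ / τ] +
      ((-σ) ^ (m + 1))⁻¹ * lambertSum m .univ ![τ / σ, -1 / σ] - 2 * Real.pi * I * r := by
  have h := sum_lambertSum_div_eq m (pairwise_im_div_ne_zero hτ hσ hστ)
    (fun z => exists_im_mul_neg hτ hσ hστ) hr
  have herase : Finset.univ.erase (0 : Fin 3) = {1, 2} ∧ Finset.univ.erase (1 : Fin 3) = {0, 2} ∧
      Finset.univ.erase (2 : Fin 3) = {1, 0} := by decide
  have hargs_τ : ![1 / -τ, σ / -τ] = -![1 / τ, σ / τ] := by simp [div_neg]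
  have hargs_σ : ![-τ / σ, 1 / σ] = -![τ / σ, -1 / σ] := by simp [neg_div]
  rw [Fin.sum_univ_three, herase.1, herase.2.1, herase.2.2, lambertSum_pair _ _ (by decide),
    lambertSum_pair _ _ (by decide), lambertSum_pair _ _ (by decide)] at h
  simp only [Matrix.cons_val_zero, Matrix.cons_val_one, Matrix.cons_val, hargs_τ, hargs_σ,
    lambertSum_neg, div_one, one_pow, inv_one, one_mul] at h
  have hsign : ∀ x : ℂ, ((-x) ^ (m + 1))⁻¹ * (-1) ^ m = -(x ^ (m + 1))⁻¹ := fun x => by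
    rw [neg_pow x, pow_succ (-1 : ℂ)]
    rcases neg_one_pow_eq_or ℂ m with hm | hm <;> rw [hm] <;> ring
  have hσsign := hsign (-σ)
  rw [neg_neg] at hσsign
  rw [← mul_assoc, ← mul_assoc, hsign, hσsign] at h
  linear_combination h

/-- The anomaly `a_k` of the modular three-term relation for `Z_k`; it vanishes for `k ≥ 4`. -/
noncomputable def modularAnomaly (k : ℕ) (τ σ : ℂ) : ℂ :=
  if k = 1 then -1 / 2 + 1 / (2 * τ) - 1 / (2 * σ) + σ / (6 * τ) + τ / (6 * σ) + 1 / (6 * τ * σ)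
  else if k = 2 then -1 / τ + 1 / σ - 1 / (τ * σ)
  else if k = 3 then 1 / (τ * σ)
  else 0

lemma hasResidueAt_zero_pow_mul_expKernel_modular (m : ℕ) (hτ : τ ≠ 0) (hσ : σ ≠ 0) :
    HasResidueAt (fun z => z ^ m * expKernel .univ ![1, -τ, σ] z) 0
      (-(m.factorial / (2 * (2 * Real.pi * I) ^ (m + 1)) * modularAnomaly (m + 1) τ σ)) := by
  convert hasResidueAt_zero_pow_mul_expKernel m (s := Finset.univ) (a := ![1, -τ, σ]) rfl
    (by simp [Fin.forall_fin_succ, hτ, hσ]) using 1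
  have h2πI := two_pi_I_ne_zero
  set c : ℂ := 2 * Real.pi * I
  simp only [Fin.prod_univ_three, Fin.sum_univ_three, Matrix.cons_val_zero, Matrix.cons_val_one,
    Matrix.cons_val, modularAnomaly]
  rcases m with _ | _ | _ | m
  · simp only [zero_add, ↓reduceIte, Nat.factorial_zero, Nat.cast_one]
    field_simp
    ring
  · simp only [zero_add, Nat.reduceAdd, OfNat.ofNat_ne_one, one_ne_zero, ↓reduceIte,
      Nat.factorial_one, Nat.cast_one]
    field_simp
    ring
  · simp only [zero_add, Nat.reduceAdd, OfNat.ofNat_ne_one, OfNat.ofNat_ne_zero, Nat.succ_ne_self,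
      ↓reduceIte, Nat.factorial_two, Nat.cast_ofNat]
    field_simp
  · simp

theorem ellipticZeta_modular_three_term_low_general
    (k : ℕ) (hk : k ≠ 0) (τ σ : ℂ) (hτ : τ ∈ UHP) (hσ : σ ∈ UHP) (hστ : σ / τ ∈ UHP) :
    ellipticZeta k τ σ =
      τ ^ (-(k : ℤ)) * ellipticZeta k (-1 / τ) (σ / τ) +
      (-σ) ^ (-(k : ℤ)) * ellipticZeta k (-(τ / σ)) (-1 / σ) +
      (Real.pi : ℂ) * Complex.I * modularAnomaly k τ σ := by
  obtain ⟨m, rfl⟩ := Nat.exists_eq_succ_of_ne_zero hk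
  have hτσ : -(τ / σ) ∈ UHP := by
    simpa only [neg_div, one_div, inv_div] using neg_one_div_mem_UHP hστ
  have h := lambertSum_three_term m hτ hσ hστ
    (hasResidueAt_zero_pow_mul_expKernel_modular m (ne_zero_of_mem_UHP hτ)
      (ne_zero_of_mem_UHP hσ))
  rw [Nat.succ_eq_add_one, ellipticZeta_succ_eq_lambertSum m hτ hσ,
    ellipticZeta_succ_eq_lambertSum m (neg_one_div_mem_UHP hτ) hστ,
    ellipticZeta_succ_eq_lambertSum m hτσ (neg_one_div_mem_UHP hσ), neg_neg,
    ← neg_div τ (-1), neg_neg, h, zpow_neg, zpow_neg, zpow_natCast, zpow_natCast]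
  have hm : (m.factorial : ℂ) ≠ 0 := Nat.cast_ne_zero.2 m.factorial_ne_zero
  have hanomaly : (2 * Real.pi * I) ^ (m + 1) / m.factorial *
      (m.factorial / (2 * (2 * Real.pi * I) ^ (m + 1))) = 1 / 2 := by
    have h2πI := two_pi_I_ne_zero
    field_simp
  linear_combination (2 * Real.pi * I) * modularAnomaly (m + 1) τ σ * hanomaly

end EllipticZeta

/-- modular three-term relation with anomaly for `Z_k`, `k ∈ {1,2,3}`:
`Z_k(τ,σ) = τ^{-k} Z_k(-1/τ,σ/τ) + (-σ)^{-k} Z_k(-τ/σ,-1/σ) + iπ a_k`. -/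
theorem ellipticZeta_modular_three_term_low
    (k : ℕ) (hk : k ∈ ({1, 2, 3} : Set ℕ)) (τ σ : ℂ)
    (hτ : τ ∈ UHP) (hσ : σ ∈ UHP) (hστ : σ / τ ∈ UHP) :
    ellipticZeta k τ σ =
      τ ^ (-(k : ℤ)) * ellipticZeta k (-1 / τ) (σ / τ) +
      (-σ) ^ (-(k : ℤ)) * ellipticZeta k (-(τ / σ)) (-1 / σ) +
      (Real.pi : ℂ) * Complex.I *
        (if k = 1 then
            -1 / 2 + 1 / (2 * τ) - 1 / (2 * σ) + σ / (6 * τ) + τ / (6 * σ) + 1 / (6 * τ * σ)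
         else if k = 2 then -1 / τ + 1 / σ - 1 / (τ * σ)
         else 1 / (τ * σ)) := by
  have hk0 : k ≠ 0 := by
    rintro rfl
    simp at hk
  rw [ellipticZeta_modular_three_term_low_general k hk0 τ σ hτ hσ hστ, modularAnomaly]
  rcases hk with rfl | rfl | rfl <;> rfl
end

section
/- Let k ≥ 5 be an odd integer and τ, σ ∈ H. Then the series ∑'_{(a,b,c)} ε(a,b)/(aτ + bσ + c)^k, taken over all triples (a,b,c) ∈ ℤ³ with (a,b,c) ≠ (0,0,0), converges absolutely and equals Z_k(τ,σ). Here ε(a,b) = (ε(a)+ε(b))/2 where ε(n) denotes the sign of the integer n (ε(n) = 1, 0, −1 according as n > 0, n = 0, n < 0); in particular ε(a,b) = 0 whenever a and b have strictly opposite signs. -/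
open Complex Filter Topology

/-!
Sum over `c` first. For fixed `(a, b)` the Lipschitz formula turns `∑ c, (aτ + bσ + c)⁻ᵏ` into a
multiple of `∑ j, jᵏ⁻¹ qʲᵃ rʲᵇ`, provided that `aτ + bσ` lies in the upper half-plane. This holds
for `a, b ≥ 0` not both zero; the weight `ε(a, b)` discards the pairs of opposite signs, while the
oddness of `k` folds `a, b ≤ 0` onto `a, b ≥ 0`. Exchanging the summations leaves, for each `j`,
the double geometric series `∑ a b, 2 ε(a, b) xᵃ yᵇ = (x + y) / ((1 - x) (1 - y))` at `x = qʲ`,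
`y = rʲ`.

For absolute convergence, `|aτ + bσ + c|` is bounded below by a multiple of `max |a| |b| |c|` as
long as `ab ≥ 0`, since `a Im τ` and `b Im σ` then do not cancel; on the remaining `(a, b, c)` the
weight is zero. So the series is dominated by `∑ v ≠ 0, ‖v‖⁻ᵏ` over `ℤ³`, and `k > 3`.
-/

theorem norm_basisFun_restrictScalars_equivFun_symm {ι : Type*} [Fintype ι] (v : ι → ℤ) :
    ‖((Pi.basisFun ℝ ι).restrictScalars ℤ).equivFun.symm v‖ = ‖v‖ := by
  have hcoe : (((Pi.basisFun ℝ ι).restrictScalars ℤ).equivFun.symm v : ι → ℝ) =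
      fun i => (v i : ℝ) := by
    classical
    ext i
    simp [Module.Basis.equivFun_symm_apply, Pi.single_apply]
  rw [Submodule.coe_norm, hcoe]
  have hnorm (i : ι) : ‖(v i : ℝ)‖₊ = ‖v i‖₊ := rfl
  simp only [Pi.norm_def, hnorm]

theorem summable_norm_intPi_inv_pow {ι : Type*} [Fintype ι] {n : ℕ} (hn : Fintype.card ι < n) :
    Summable fun v : ι → ℤ => ‖v‖⁻¹ ^ n := by
  let b := (Pi.basisFun ℝ ι).restrictScalars ℤ
  have hrank : Module.finrank ℤ (Submodule.span ℤ (Set.range (Pi.basisFun ℝ ι))) < n := by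
    rwa [Module.finrank_eq_card_basis b]
  refine (b.equivFun.symm.toEquiv.summable_iff.mpr
    (ZLattice.summable_norm_pow_inv _ n hrank)).congr fun v => ?_
  simp only [Function.comp_apply, LinearEquiv.coe_toEquiv, b,
    norm_basisFun_restrictScalars_equivFun_symm]

theorem summable_norm_int_prod_prod_inv_pow {n : ℕ} (hn : 3 < n) :
    Summable fun v : ℤ × ℤ × ℤ => ‖v‖⁻¹ ^ n := by
  let toPi : ℤ × ℤ × ℤ → Fin 3 → ℤ := fun v => ![v.1, v.2.1, v.2.2]
  have hinj : Function.Injective toPi := by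
    rintro ⟨a, b, c⟩ ⟨a', b', c'⟩ h
    simpa [toPi] using h
  have hnorm (v) : ‖toPi v‖ = ‖v‖ := by
    simp [toPi, Pi.norm_def, Fin.univ_succ, Prod.norm_def]
  exact ((summable_norm_intPi_inv_pow (by simpa using hn)).comp_injective hinj).congr
    fun v => by rw [Function.comp_apply, hnorm]

theorem tsum_eq_two_nsmul_tsum_Ici_zero_of_even {α M : Type*} [AddCommGroup α] [PartialOrder α]
    [IsOrderedAddMonoid α] [AddCommGroup M] [UniformSpace M] [IsUniformAddGroup M]
    [CompleteSpace M] [T2Space M] {F : α → M} (hF : Summable F) (heven : Function.Even F)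
    (h0 : F 0 = 0) (hsupp : ∀ p, F p ≠ 0 → 0 ≤ p ∨ p ≤ 0) :
    ∑' p, F p = 2 • ∑' p : Set.Ici (0 : α), F p := by
  classical
  let G : α → M := (Set.Ici 0).indicator F
  have hsplit (p : α) : F p = G p + G (-p) := by
    rcases eq_or_ne (F p) 0 with hp | hp
    · simp [G, Set.indicator_apply, heven p, hp]
    have hp0 : p ≠ 0 := fun h => hp (h ▸ h0)
    rcases hsupp p hp with hpos | hneg
    · simp [G, hpos, (hpos.lt_of_ne' hp0).not_ge]
    · simp [G, heven p, hneg, (hneg.lt_of_ne hp0).not_ge]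
  have hG : Summable G := hF.indicator _
  have hG_neg : Summable fun p => G (-p) := hG.comp_injective neg_injective
  have htsum_neg : ∑' p, G (-p) = ∑' p, G p := (Equiv.neg α).tsum_eq G
  rw [tsum_congr hsplit, hG.tsum_add hG_neg, htsum_neg, ← two_nsmul, tsum_subtype (Set.Ici 0) F]

theorem range_natCast_prodMap : Set.range (Prod.map Nat.cast Nat.cast) = Set.Ici (0 : ℤ × ℤ) := by
  ext ⟨a, b⟩
  simp [Set.range_prodMap, Prod.le_def]

theorem tsum_int_prod_eq_two_nsmul_tsum_nat_prod {M : Type*} [AddCommGroup M] [UniformSpace M]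
    [IsUniformAddGroup M] [CompleteSpace M] [T2Space M] {F : ℤ × ℤ → M} (hF : Summable F)
    (heven : Function.Even F) (h0 : F 0 = 0) (hsupp : ∀ a b : ℤ, a * b < 0 → F (a, b) = 0) :
    ∑' p, F p = 2 • ∑' p : ℕ × ℕ, F (p.1, p.2) := by
  have hcomparable (p : ℤ × ℤ) (hp : F p ≠ 0) : 0 ≤ p ∨ p ≤ 0 := by
    have hmul : 0 ≤ p.1 * p.2 := not_lt.mp fun h => hp (hsupp _ _ h)
    simpa [Prod.le_def] using mul_nonneg_iff.mp hmul
  have hinj : Function.Injective (Prod.map Nat.cast Nat.cast : ℕ × ℕ → ℤ × ℤ) :=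
    Nat.cast_injective.prodMap Nat.cast_injective
  rw [tsum_eq_two_nsmul_tsum_Ici_zero_of_even hF heven h0 hcomparable, ← range_natCast_prodMap,
    tsum_range F hinj]
  rfl

theorem hasSum_sign_mul_geometric {𝕜 : Type*} [NormedField 𝕜] {x : 𝕜} (hx : ‖x‖ < 1) :
    HasSum (fun m : ℕ => ((m : ℤ).sign : 𝕜) * x ^ m) (x / (1 - x)) := by
  have hsign (m : ℕ) : ((m + 1 : ℕ) : ℤ).sign = 1 := Int.sign_eq_one_of_pos (by positivity)
  rw [← hasSum_nat_add_iff' 1]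
  simpa only [hsign, Int.cast_one, one_mul, pow_succ', ← div_eq_mul_inv, Finset.sum_range_one,
    Nat.cast_zero, Int.sign_zero, Int.cast_zero, zero_mul, sub_zero] using
    (hasSum_geometric_of_norm_lt_one hx).mul_left x

theorem hasSum_prod_mul {𝕜 ι κ : Type*} [RCLike 𝕜] {u : ι → 𝕜} {v : κ → 𝕜} {s t : 𝕜}
    (hu : HasSum u s) (hv : HasSum v t) :
    HasSum (fun p : ι × κ => u p.1 * v p.2) (s * t) :=
  hu.mul hv (summable_mul_of_summable_norm hu.summable.norm hv.summable.norm)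

/-- The weight `ε(a, b) = (ε(a) + ε(b)) / 2` of the lattice sum, as a complex number. -/
noncomputable def meanSign (a b : ℤ) : ℂ :=
  ((a.sign + b.sign : ℤ) : ℂ) / 2

theorem meanSign_zero_zero : meanSign 0 0 = 0 := by
  simp [meanSign]

theorem meanSign_neg_neg (a b : ℤ) : meanSign (-a) (-b) = -meanSign a b := by
  simp only [meanSign, Int.sign_neg]
  push_cast
  ring

theorem meanSign_eq_zero_of_mul_neg {a b : ℤ} (hab : a * b < 0) : meanSign a b = 0 := by
  rcases mul_neg_iff.mp hab with ⟨ha, hb⟩ | ⟨ha, hb⟩ <;>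
    simp [meanSign, Int.sign_eq_one_of_pos, Int.sign_eq_neg_one_of_neg, ha, hb]

theorem add_pos_of_meanSign_natCast_ne_zero {m n : ℕ} (hε : meanSign m n ≠ 0) : 0 < m + n := by
  by_contra! h
  obtain ⟨rfl, rfl⟩ : m = 0 ∧ n = 0 := by lia
  exact hε meanSign_zero_zero

theorem norm_meanSign_le_one (a b : ℤ) : ‖meanSign a b‖ ≤ 1 := by
  have habs : |a.sign + b.sign| ≤ 2 := by
    rcases Int.sign_trichotomy a with ha | ha | ha <;>
      rcases Int.sign_trichotomy b with hb | hb | hb <;> simp [ha, hb]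
  rw [meanSign, norm_div, Complex.norm_intCast, Complex.norm_ofNat, div_le_one two_pos]
  exact_mod_cast habs

/-- The summand `ε(a, b) / (aτ + bσ + c) ^ k` of the lattice sum at `v = (a, b, c)`, extended to
all of `ℤ³`; it vanishes whenever `a = b = 0`. -/
noncomputable def latticeTerm (k : ℕ) (τ σ : ℂ) (v : ℤ × ℤ × ℤ) : ℂ :=
  meanSign v.1 v.2.1 / ((v.1 : ℂ) * τ + (v.2.1 : ℂ) * σ + (v.2.2 : ℂ)) ^ k

theorem latticeTerm_eq_zero {a b : ℤ} (hε : meanSign a b = 0) (k : ℕ) (τ σ : ℂ) (c : ℤ) :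
    latticeTerm k τ σ (a, b, c) = 0 := by
  rw [latticeTerm, hε, zero_div]

theorem even_latticeTerm {k : ℕ} (hk : Odd k) (τ σ : ℂ) : Function.Even (latticeTerm k τ σ) := by
  rintro ⟨a, b, c⟩
  have hneg : ((-a : ℤ) : ℂ) * τ + ((-b : ℤ) : ℂ) * σ + ((-c : ℤ) : ℂ) = -(a * τ + b * σ + c) := by
    push_cast
    ring
  simp only [latticeTerm, Prod.neg_mk, meanSign_neg_neg, hneg, hk.neg_pow, neg_div_neg_eq]

/-- The sum of `latticeTerm k τ σ` over the row `{(a, b, c) | c ∈ ℤ}`, where `p = (a, b)`. -/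
noncomputable def rowSum (k : ℕ) (τ σ : ℂ) (p : ℤ × ℤ) : ℂ :=
  ∑' c : ℤ, latticeTerm k τ σ (p.1, p.2, c)

theorem rowSum_eq_zero {a b : ℤ} (hε : meanSign a b = 0) (k : ℕ) (τ σ : ℂ) :
    rowSum k τ σ (a, b) = 0 := by
  simp only [rowSum, latticeTerm_eq_zero hε, tsum_zero]

theorem even_rowSum {k : ℕ} (hk : Odd k) (τ σ : ℂ) : Function.Even (rowSum k τ σ) := by
  intro p
  rw [rowSum, ← (Equiv.neg ℤ).tsum_eq]
  exact tsum_congr fun c => even_latticeTerm hk τ σ (p.1, p.2, c)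

theorem abs_mul_im_le_norm_of_mul_nonneg {τ σ : ℂ} (hτ : 0 < τ.im) (hσ : 0 < σ.im)
    {a b : ℝ} (hab : 0 ≤ a * b) (c : ℝ) : |a| * τ.im ≤ ‖a * τ + b * σ + c‖ := by
  have hcross : 0 ≤ (a * b) * (τ.im * σ.im) := by positivity
  calc |a| * τ.im = |a * τ.im| := by rw [abs_mul, abs_of_pos hτ]
    _ ≤ |a * τ.im + b * σ.im| := sq_le_sq.mp (by nlinarith [sq_nonneg (b * σ.im)])
    _ = |(a * τ + b * σ + c : ℂ).im| := by simp
    _ ≤ ‖a * τ + b * σ + c‖ := Complex.abs_im_le_norm _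

theorem exists_norm_le_mul_norm_linear_of_mul_nonneg {τ σ : ℂ} (hτ : 0 < τ.im) (hσ : 0 < σ.im) :
    ∃ C : ℝ, 0 ≤ C ∧ ∀ a b c : ℝ, 0 ≤ a * b → ‖(a, b, c)‖ ≤ C * ‖a * τ + b * σ + c‖ := by
  refine ⟨max τ.im⁻¹ (max σ.im⁻¹ (1 + τ.im⁻¹ * ‖τ‖ + σ.im⁻¹ * ‖σ‖)), by positivity,
    fun a b c hab => ?_⟩
  set z : ℂ := a * τ + b * σ + c with hz
  have ha : |a| ≤ τ.im⁻¹ * ‖z‖ := by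
    rw [le_inv_mul_iff₀ hτ, mul_comm]
    exact abs_mul_im_le_norm_of_mul_nonneg hτ hσ hab c
  have hb : |b| ≤ σ.im⁻¹ * ‖z‖ := by
    rw [le_inv_mul_iff₀ hσ, mul_comm, hz, add_comm (a * τ : ℂ)]
    exact abs_mul_im_le_norm_of_mul_nonneg hσ hτ (by rwa [mul_comm]) c
  have hc : |c| ≤ (1 + τ.im⁻¹ * ‖τ‖ + σ.im⁻¹ * ‖σ‖) * ‖z‖ :=
    calc |c| = ‖z - a * τ - b * σ‖ := by
          rw [← Real.norm_eq_abs, ← Complex.norm_real, hz]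
          congr 1
          ring
      _ ≤ ‖z‖ + ‖a * τ‖ + ‖b * σ‖ :=
          (norm_sub_le _ _).trans (by gcongr; exact norm_sub_le _ _)
      _ = ‖z‖ + |a| * ‖τ‖ + |b| * ‖σ‖ := by simp
      _ ≤ ‖z‖ + τ.im⁻¹ * ‖z‖ * ‖τ‖ + σ.im⁻¹ * ‖z‖ * ‖σ‖ := by gcongr
      _ = (1 + τ.im⁻¹ * ‖τ‖ + σ.im⁻¹ * ‖σ‖) * ‖z‖ := by ring
  simp only [Prod.norm_def, Real.norm_eq_abs, max_mul_of_nonneg _ _ (norm_nonneg z)]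
  gcongr

theorem exists_norm_latticeTerm_le (k : ℕ) {τ σ : ℂ} (hτ : 0 < τ.im) (hσ : 0 < σ.im) :
    ∃ C : ℝ, ∀ v, ‖latticeTerm k τ σ v‖ ≤ C * ‖v‖⁻¹ ^ k := by
  obtain ⟨C, hC0, hC⟩ := exists_norm_le_mul_norm_linear_of_mul_nonneg hτ hσ
  refine ⟨C ^ k, fun v => ?_⟩
  obtain ⟨a, b, c⟩ := v
  by_cases hε : meanSign a b = 0
  · rw [latticeTerm_eq_zero hε, norm_zero]
    positivity
  have hab : 0 ≤ (a : ℝ) * b := by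
    exact_mod_cast not_lt.mp fun h => hε (meanSign_eq_zero_of_mul_neg h)
  have hv : 0 < ‖(a, b, c)‖ := norm_pos_iff.mpr fun h => hε <| by
    rw [Prod.mk_eq_zero, Prod.mk_eq_zero] at h
    rw [h.1, h.2.1, meanSign_zero_zero]
  have hinv : ‖(a * τ + b * σ + c : ℂ)‖⁻¹ ≤ C * ‖(a, b, c)‖⁻¹ := by
    rw [← div_eq_mul_inv, le_div_iff₀ hv]
    exact inv_mul_le_of_le_mul₀ (norm_nonneg _) hC0 ((hC a b c hab).trans_eq (by simp [mul_comm]))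
  calc ‖latticeTerm k τ σ (a, b, c)‖
      = ‖meanSign a b‖ * ‖(a * τ + b * σ + c : ℂ)‖⁻¹ ^ k := by
        rw [latticeTerm, norm_div, norm_pow, div_eq_mul_inv, inv_pow]
    _ ≤ 1 * (C * ‖(a, b, c)‖⁻¹) ^ k := by
        gcongr
        exact norm_meanSign_le_one a b
    _ = C ^ k * ‖(a, b, c)‖⁻¹ ^ k := by rw [one_mul, mul_pow]

theorem summable_norm_latticeTerm {k : ℕ} (hk : 3 < k) {τ σ : ℂ} (hτ : 0 < τ.im) (hσ : 0 < σ.im) :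
    Summable fun v => ‖latticeTerm k τ σ v‖ := by
  obtain ⟨C, hC⟩ := exists_norm_latticeTerm_le k hτ hσ
  exact ((summable_norm_int_prod_prod_inv_pow hk).mul_left C).of_nonneg_of_le
    (fun v => norm_nonneg _) hC

theorem norm_qexp_lt_one {z : ℂ} (hz : 0 < z.im) : ‖qexp z‖ < 1 :=
  UpperHalfPlane.norm_exp_two_pi_I_lt_one ⟨z, hz⟩

theorem qexp_natCast_mul_add_natCast_mul (m n : ℕ) (τ σ : ℂ) :
    qexp (m * τ + n * σ) = qexp τ ^ m * qexp σ ^ n := by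
  simp only [qexp, ← Complex.exp_nat_mul, ← Complex.exp_add]
  ring_nf

theorem tsum_one_div_add_intCast_pow {k : ℕ} (hk : 2 ≤ k) {z : ℂ} (hz : 0 < z.im) :
    ∑' c : ℤ, 1 / (z + c) ^ k =
      (-2 * Real.pi * Complex.I) ^ k / (k - 1).factorial *
        ∑' j : ℕ+, (j : ℂ) ^ (k - 1) * qexp z ^ (j : ℕ) := by
  obtain ⟨e, rfl⟩ : ∃ e, k = e + 1 := ⟨k - 1, by lia⟩
  exact EisensteinSeries.qExpansion_identity_pnat (by lia) ⟨z, hz⟩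

theorem rowSum_natCast {k : ℕ} (hk : 2 ≤ k) {τ σ : ℂ} (hτ : 0 < τ.im) (hσ : 0 < σ.im)
    (m n : ℕ) :
    rowSum k τ σ (m, n) =
      (-2 * Real.pi * Complex.I) ^ k / (k - 1).factorial *
        ∑' j : ℕ+, (j : ℂ) ^ (k - 1) *
          (meanSign m n * ((qexp τ ^ (j : ℕ)) ^ m * (qexp σ ^ (j : ℕ)) ^ n)) := by
  by_cases hε : meanSign m n = 0
  · simp [rowSum_eq_zero hε, hε]
  have hz : 0 < ((m : ℂ) * τ + n * σ).im := by
    have him : ((m : ℂ) * τ + n * σ).im = m * τ.im + n * σ.im := by simp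
    rw [him]
    rcases Nat.add_pos_iff_pos_or_pos.mp (add_pos_of_meanSign_natCast_ne_zero hε) with hm | hn <;>
      positivity
  calc rowSum k τ σ (m, n)
      = meanSign m n * ∑' c : ℤ, 1 / (m * τ + n * σ + c) ^ k := by
        simp only [rowSum, latticeTerm, Int.cast_natCast, ← tsum_mul_left, mul_one_div]
    _ = (-2 * Real.pi * Complex.I) ^ k / (k - 1).factorial *
          ∑' j : ℕ+, meanSign m n *
            ((j : ℂ) ^ (k - 1) * (qexp τ ^ m * qexp σ ^ n) ^ (j : ℕ)) := by
        rw [tsum_one_div_add_intCast_pow hk hz, qexp_natCast_mul_add_natCast_mul, tsum_mul_left,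
          mul_left_comm]
    _ = (-2 * Real.pi * Complex.I) ^ k / (k - 1).factorial *
          ∑' j : ℕ+, (j : ℂ) ^ (k - 1) *
            (meanSign m n * ((qexp τ ^ (j : ℕ)) ^ m * (qexp σ ^ (j : ℕ)) ^ n)) := by
        congr! 3 with j
        rw [mul_pow, pow_right_comm (qexp τ), pow_right_comm (qexp σ), mul_left_comm]

theorem hasSum_meanSign_mul_geometric {x y : ℂ} (hx : ‖x‖ < 1) (hy : ‖y‖ < 1) :
    HasSum (fun p : ℕ × ℕ => meanSign p.1 p.2 * (x ^ p.1 * y ^ p.2))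
      ((x + y) / ((1 - x) * (1 - y)) / 2) := by
  have hx1 : 1 - x ≠ 0 := sub_ne_zero.mpr fun h => by simp [← h] at hx
  have hy1 : 1 - y ≠ 0 := sub_ne_zero.mpr fun h => by simp [← h] at hy
  have hsum := ((hasSum_prod_mul (hasSum_sign_mul_geometric hx)
    (hasSum_geometric_of_norm_lt_one hy)).add (hasSum_prod_mul
      (hasSum_geometric_of_norm_lt_one hx) (hasSum_sign_mul_geometric hy))).div_const 2
  convert! hsum using 2 with p
  · simp only [meanSign]
    push_cast
    ring
  · field_simp

theorem mul_norm_meanSign_mul_geometric_le {r : ℝ} (hr : r ≤ 1) {x y : ℂ}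
    (hx : ‖x‖ ≤ r) (hy : ‖y‖ ≤ r) {j : ℕ} (hj : 1 ≤ j) (m n : ℕ) :
    r * ‖meanSign m n * ((x ^ j) ^ m * (y ^ j) ^ n)‖ ≤ r ^ j * (r ^ m * r ^ n) := by
  have hr0 : 0 ≤ r := (norm_nonneg x).trans hx
  by_cases hε : meanSign m n = 0
  · rw [hε, zero_mul, norm_zero, mul_zero]
    positivity
  have hmn : 1 ≤ m + n := add_pos_of_meanSign_natCast_ne_zero hε
  have hexp : j + (m + n) ≤ 1 + (j * m + j * n) := by nlinarith
  calc r * ‖meanSign m n * ((x ^ j) ^ m * (y ^ j) ^ n)‖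
      = r * (‖meanSign m n‖ * ((‖x‖ ^ j) ^ m * (‖y‖ ^ j) ^ n)) := by simp only [norm_mul, norm_pow]
    _ ≤ r * (1 * ((r ^ j) ^ m * (r ^ j) ^ n)) := by
        gcongr
        exact norm_meanSign_le_one m n
    _ = r ^ (1 + (j * m + j * n)) := by ring
    _ ≤ r ^ (j + (m + n)) := pow_le_pow_of_le_one hr0 hr hexp
    _ = r ^ j * (r ^ m * r ^ n) := by ring

theorem summable_pow_mul_meanSign_mul_geometric (e : ℕ) {x y : ℂ} (hx : ‖x‖ < 1) (hy : ‖y‖ < 1) :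
    Summable (Function.uncurry fun (j : ℕ+) (p : ℕ × ℕ) => (j : ℂ) ^ e *
      (meanSign p.1 p.2 * ((x ^ (j : ℕ)) ^ p.1 * (y ^ (j : ℕ)) ^ p.2))) := by
  obtain ⟨r, hxyr, hr1⟩ := exists_between (max_lt hx hy)
  obtain ⟨hxr, hyr⟩ := max_lt_iff.mp hxyr
  have hr0 : 0 < r := (norm_nonneg x).trans_lt hxr
  have hr_norm : ‖r‖ < 1 := by rwa [Real.norm_of_nonneg hr0.le]
  have hgeom : Summable fun n : ℕ => r ^ n := summable_geometric_of_lt_one hr0.le hr1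
  have hpow : Summable fun j : ℕ+ => (j : ℝ) ^ e * r ^ (j : ℕ) :=
    (summable_pow_mul_geometric_of_norm_lt_one e hr_norm).comp_injective PNat.coe_injective
  have hmaj : Summable fun t : ℕ+ × ℕ × ℕ =>
      ((t.1 : ℝ) ^ e * r ^ (t.1 : ℕ)) * (r ^ t.2.1 * r ^ t.2.2) :=
    (hasSum_prod_mul hpow.hasSum (hasSum_prod_mul hgeom.hasSum hgeom.hasSum)).summable
  refine (hmaj.div_const r).of_norm_bounded fun ⟨j, m, n⟩ => ?_
  rw [Function.uncurry_apply_pair, le_div_iff₀' hr0, norm_mul, norm_pow, Complex.norm_natCast,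
    mul_left_comm, mul_assoc]
  exact mul_le_mul_of_nonneg_left
    (mul_norm_meanSign_mul_geometric_le hr1.le hxr.le hyr.le j.pos m n) (by positivity)

theorem ellipticZeta_eq_tsum_tsum_meanSign {k : ℕ} (hk : Odd k) {τ σ : ℂ} (hτ : 0 < τ.im)
    (hσ : 0 < σ.im) :
    ellipticZeta k τ σ =
      2 * ((-2 * Real.pi * Complex.I) ^ k / (k - 1).factorial *
        ∑' (j : ℕ+) (p : ℕ × ℕ), (j : ℂ) ^ (k - 1) *
          (meanSign p.1 p.2 * ((qexp τ ^ (j : ℕ)) ^ p.1 * (qexp σ ^ (j : ℕ)) ^ p.2))) := by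
  have hq {z : ℂ} (hz : 0 < z.im) (j : ℕ+) : ‖qexp z ^ (j : ℕ)‖ < 1 := by
    rw [norm_pow]
    exact pow_lt_one₀ (norm_nonneg _) (norm_qexp_lt_one hz) j.ne_zero
  have hinner (j : ℕ+) := (hasSum_meanSign_mul_geometric (hq hτ j) (hq hσ j)).tsum_eq
  have hpref : (-2 * Real.pi * Complex.I) ^ k = -(2 * Real.pi * Complex.I) ^ k := by
    rw [neg_mul, neg_mul, hk.neg_pow]
  simp only [tsum_mul_left, hinner, hpref, ellipticZeta, hk.neg_one_pow]
  rw [neg_div, mul_left_comm]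
  congr 1
  rw [← tsum_mul_left]
  exact tsum_congr fun j => by ring

theorem tsum_latticeTerm {k : ℕ} (hk : 3 < k) (hodd : Odd k) {τ σ : ℂ} (hτ : 0 < τ.im)
    (hσ : 0 < σ.im) : ∑' v, latticeTerm k τ σ v = ellipticZeta k τ σ := by
  have hsum : Summable fun t : (ℤ × ℤ) × ℤ => latticeTerm k τ σ (t.1.1, t.1.2, t.2) :=
    (Equiv.prodAssoc ℤ ℤ ℤ).summable_iff.mpr (summable_norm_latticeTerm hk hτ hσ).of_norm
  have hrows : Summable (rowSum k τ σ) := hsum.prod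
  calc ∑' v, latticeTerm k τ σ v = ∑' p, rowSum k τ σ p := by
        rw [← (Equiv.prodAssoc ℤ ℤ ℤ).tsum_eq]
        exact hsum.tsum_prod
    _ = 2 * ∑' p : ℕ × ℕ, rowSum k τ σ (p.1, p.2) := by
        rw [tsum_int_prod_eq_two_nsmul_tsum_nat_prod hrows (even_rowSum hodd τ σ)
          (rowSum_eq_zero meanSign_zero_zero k τ σ)
          fun a b hab => rowSum_eq_zero (meanSign_eq_zero_of_mul_neg hab) k τ σ, nsmul_eq_mul,
          Nat.cast_ofNat]
    _ = ellipticZeta k τ σ := by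
        simp only [rowSum_natCast (show 2 ≤ k by lia) hτ hσ]
        rw [tsum_mul_left, ellipticZeta_eq_tsum_tsum_meanSign hodd hτ hσ,
          (summable_pow_mul_meanSign_mul_geometric (k - 1) (norm_qexp_lt_one hτ)
            (norm_qexp_lt_one hσ)).tsum_comm]

/-- Zagier's lattice-sum representation: for odd `k ≥ 5`,
`Z_k(τ,σ) = ∑'_{(a,b,c)≠0} ε(a,b)/(aτ+bσ+c)^k` with `ε(a,b) = (sign a + sign b)/2`,
the sum converging absolutely. -/
theorem ellipticZeta_eq_lattice_sum
    (k : ℕ) (hk : 5 ≤ k) (hodd : Odd k) (τ σ : ℂ) (hτ : τ ∈ UHP) (hσ : σ ∈ UHP) :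
    Summable (fun v : {v : ℤ × ℤ × ℤ // v ≠ 0} =>
      ‖(((v.1.1.sign + v.1.2.1.sign : ℤ) : ℂ) / 2) /
        ((v.1.1 : ℂ) * τ + (v.1.2.1 : ℂ) * σ + (v.1.2.2 : ℂ)) ^ k‖) ∧
    ∑' v : {v : ℤ × ℤ × ℤ // v ≠ 0},
        (((v.1.1.sign + v.1.2.1.sign : ℤ) : ℂ) / 2) /
          ((v.1.1 : ℂ) * τ + (v.1.2.1 : ℂ) * σ + (v.1.2.2 : ℂ)) ^ k =
      ellipticZeta k τ σ := by
  have hsupp : Function.support (latticeTerm k τ σ) ⊆ {v | v ≠ 0} := by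
    rintro _ hv rfl
    exact hv (latticeTerm_eq_zero meanSign_zero_zero k τ σ 0)
  have hk' : 3 < k := by lia
  exact ⟨(summable_norm_latticeTerm hk' hτ hσ).subtype _,
    (tsum_subtype_eq_of_support_subset hsupp).trans (tsum_latticeTerm hk' hodd hτ hσ)⟩
end
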